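/- arXiv:1304.5052 — 2 statements merged into one kernel-verified Lean document; each statement's English description precedes it below -/
import Mathlib

section
/- (Borel's theorem for SL_n, as proved in the paper in characteristic zero.) Let k be an algebraically closed field of characteristic zero, let n ≥ 1, let d ≥ 2, and let w ≠ 1 be a word in the free group F_d on generators x_1,…,x_d. Then the image of the word map w : SL_n(k)^d → SL_n(k) is Zariski dense in SL_n(k): every polynomial in the n² matrix entries with coefficients in k that vanishes at every matrix of the form w(g_1,…,g_d) with g_1,…,g_d ∈ SL_n(k) vanishes at every element of SL_n(k). -/
namespace BorelSL

open Matrix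

section Free

variable {k : Type*} [Field k]

/-- The commutator substitution. -/
def commW {d : ℕ} (w : FreeGroup (Fin d)) : FreeGroup (Fin d × Bool) :=
  FreeGroup.lift (fun i => FreeGroup.of (i, true) * FreeGroup.of (i, false) * (FreeGroup.of (i, true))⁻¹ * (FreeGroup.of (i, false))⁻¹) w

lemma lift_commW {G : Type*} [Group G] {d : ℕ} (A : Fin d × Bool → G) (w : FreeGroup (Fin d)) :
    FreeGroup.lift A (commW w) = FreeGroup.lift (fun i => A (i, true) * A (i, false) * (A (i, true))⁻¹ * (A (i, false))⁻¹) w := by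
  have : (FreeGroup.lift A).comp (FreeGroup.lift
      (fun i : Fin d => FreeGroup.of (i, true) * FreeGroup.of (i, false) * (FreeGroup.of (i, true))⁻¹ * (FreeGroup.of (i, false))⁻¹))
      = FreeGroup.lift (fun i => A (i, true) * A (i, false) * (A (i, true))⁻¹ * (A (i, false))⁻¹) := by
    ext i
    simp
  exact DFunLike.congr_fun this w

/-- One parameter unipotent group attached to a square-zero element. -/
def uni {R : Type*} [Ring R] (N : R) (hN : N * N = 0) : Multiplicative ℤ →* Rˣ where
  toFun m := ⟨1 + (m.toAdd : ℤ) • N, 1 - (m.toAdd : ℤ) • N,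
    by simp only [mul_sub, add_mul, smul_mul_smul_comm, hN]; simp,
    by simp only [mul_add, sub_mul, smul_mul_smul_comm, hN]; simp⟩
  map_one' := by ext; simp
  map_mul' a b := by
    ext
    simp only [Units.val_mul, mul_add, add_mul, smul_mul_smul_comm, hN, toAdd_mul, add_smul, mul_one, one_mul, smul_zero, add_zero]
    abel

variable {n d : ℕ}

/-- direction vectors -/
def vv (k : Type*) [Field k] (n : ℕ) (i : ℕ) : Fin (n + 2) → k :=
  fun a => if a = 0 then 1 else if a = 1 then (i : k) else 0

/-- direction covectors -/
def ph (k : Type*) [Field k] (n : ℕ) (i : ℕ) : Fin (n + 2) → k :=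
  fun a => if a = 0 then -(i : k) else if a = 1 then 1 else 0

lemma ph_dot_vv (i j : ℕ) : ph k n i ⬝ᵥ vv k n j = (j : k) - i := by
  have h1 : ∀ x : Fin n, x.succ.succ ≠ 1 := fun x => by
    rw [Ne, Fin.ext_iff]; simp
  simp [dotProduct, ph, vv, Fin.sum_univ_succ, h1]
  ring

/-- rank one nilpotents -/
def NN (k : Type*) [Field k] (n i : ℕ) : Matrix (Fin (n + 2)) (Fin (n + 2)) k :=
  vecMulVec (vv k n i) (ph k n i)

lemma NN_sq (i : ℕ) : NN k n i * NN k n i = 0 := by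
  rw [NN, vecMulVec_mul_vecMulVec, ph_dot_vv]
  ext; simp

/-- polynomial version -/
noncomputable def NX (k : Type*) [Field k] (n i : ℕ) :
    Matrix (Fin (n + 2)) (Fin (n + 2)) (Polynomial k) :=
  (Polynomial.X : Polynomial k) • (NN k n i).map Polynomial.C

lemma NX_sq (i : ℕ) : NX k n i * NX k n i = 0 := by
  have : (NN k n i).map Polynomial.C * (NN k n i).map Polynomial.C = 0 := by
    rw [← Matrix.map_mul, NN_sq]; ext; simp
  simp [NX, this]

lemma neword_claim [CharZero k] {i j : Fin d}
    (W : Monoid.CoprodI.NeWord (fun _ : Fin d => Multiplicative ℤ) i j) :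
    ∃ r : ℕ, 1 ≤ r ∧ ∃ c : k, c ≠ 0 ∧
      ∀ a b, ((Monoid.CoprodI.lift (fun i : Fin d => uni (NX k n i) (NX_sq (i : ℕ))) W.prod).val
          a b).natDegree ≤ r ∧
        ((Monoid.CoprodI.lift (fun i : Fin d => uni (NX k n i) (NX_sq (i : ℕ))) W.prod).val
          a b).coeff r = c * (vv k n i a * ph k n j b) := by
  induction W with
  | @singleton i x hx =>
    refine ⟨1, le_rfl, (x.toAdd : ℤ), ?_, ?_⟩
    · simpa using hx
    · intro a b
      have e : (Monoid.CoprodI.lift (fun i : Fin d => uni (NX k n i) (NX_sq (i : ℕ)))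
          (Monoid.CoprodI.NeWord.singleton (i := i) (M := fun _ : Fin d => Multiplicative ℤ) x hx).prod).val a b =
          (1 : Matrix (Fin (n+2)) (Fin (n+2)) (Polynomial k)) a b +
           Polynomial.C ((x.toAdd : ℤ) * (vv k n i a * ph k n i b)) * Polynomial.X := by
        simp [uni, NX, NN, vecMulVec_apply, -zsmul_eq_mul]
        rw [zsmul_eq_mul]
        ring
      rw [e]
      constructor
      · refine (Polynomial.natDegree_add_le _ _).trans (max_le ?_ ?_)
        · rw [Matrix.one_apply]; split_ifs <;> simp
        · exact Polynomial.natDegree_C_mul_le _ _ |>.trans Polynomial.natDegree_X_le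
      · rw [Polynomial.coeff_add, Polynomial.coeff_C_mul_X, if_pos rfl, Matrix.one_apply]
        split_ifs <;> simp [Polynomial.coeff_one]
  | @append i j k' l w₁ hne w₂ ih₁ ih₂ =>
    obtain ⟨r, hr, c, hc, h1⟩ := ih₁
    obtain ⟨s, hs, e, he, h2⟩ := ih₂
    refine ⟨r + s, by omega, c * e * ((k' : ℕ) - (j : ℕ) : k), ?_, ?_⟩
    · refine mul_ne_zero (mul_ne_zero hc he) (sub_ne_zero.2 ?_)
      intro h
      exact hne (Fin.ext (Nat.cast_injective h).symm)
    · intro a b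
      rw [Monoid.CoprodI.NeWord.append_prod, map_mul, Units.val_mul, Matrix.mul_apply]
      constructor
      · refine Polynomial.natDegree_sum_le_of_forall_le _ _ fun x _ => ?_
        exact Polynomial.natDegree_mul_le_of_le (h1 a x).1 (h2 x b).1
      · rw [Polynomial.finsetSum_coeff]
        rw [← ph_dot_vv (n := n), dotProduct, Finset.mul_sum, Finset.sum_mul]
        refine Finset.sum_congr rfl fun x _ => ?_
        rw [Polynomial.coeff_mul_add_eq_of_natDegree_le (h1 a x).1 (h2 x b).1, (h1 a x).2, (h2 x b).2]
        ring

lemma uni_nontriv [CharZero k] (w : FreeGroup (Fin d)) (hw : w ≠ 1) :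
    FreeGroup.lift (fun i : Fin d => uni (NX k n i) (NX_sq (i : ℕ)) (Multiplicative.ofAdd 1)) w ≠ 1 := by
  classical
  let th : FreeGroup (Fin d) →* Monoid.CoprodI (fun _ : Fin d => Multiplicative ℤ) :=
    FreeGroup.lift (fun i => Monoid.CoprodI.of (i := i) (Multiplicative.ofAdd (1 : ℤ)))
  let et : Monoid.CoprodI (fun _ : Fin d => Multiplicative ℤ) →* FreeGroup (Fin d) :=
    Monoid.CoprodI.lift (fun i => zpowersHom _ (FreeGroup.of i))
  have het : et.comp th = MonoidHom.id _ := by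
    ext i
    simp [et, th]
  have hth : th w ≠ 1 := by
    intro h
    apply hw
    have := DFunLike.congr_fun het w
    simp only [MonoidHom.comp_apply, h, map_one] at this
    exact this.symm
  have hl : FreeGroup.lift (fun i : Fin d => uni (NX k n i) (NX_sq (i : ℕ)) (Multiplicative.ofAdd 1))
      = (Monoid.CoprodI.lift (fun i : Fin d => uni (NX k n i) (NX_sq (i : ℕ)))).comp th := by
    ext1 i
    simp [th]
  rw [hl, MonoidHom.comp_apply]
  obtain ⟨W, hW⟩ := (Monoid.CoprodI.Word.equiv (M := fun _ : Fin d => Multiplicative ℤ)).symm.surjective (th w)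
  have hW' : W.prod = th w := hW
  have hne : W ≠ Monoid.CoprodI.Word.empty := by
    rintro rfl
    exact hth (by rw [← hW', Monoid.CoprodI.Word.prod_empty])
  obtain ⟨i, j, V, hV⟩ := Monoid.CoprodI.NeWord.of_word W hne
  have hV' : V.prod = th w := by rw [← hW', ← hV]; rfl
  rw [← hV']
  obtain ⟨r, hr, c, hc, h⟩ := neword_claim (k := k) (n := n) V
  intro h1
  have := (h 0 1).2
  rw [h1] at this
  simp [vv, ph] at this
  exact hc this.symm

lemma exists_nontriv [CharZero k] (w : FreeGroup (Fin d)) (hw : w ≠ 1) :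
    ∃ A : Fin d × Bool → GL (Fin (n + 2)) k, FreeGroup.lift A (commW w) ≠ 1 := by
  classical
  have h1 := uni_nontriv (k := k) (n := n) w hw
  set U := FreeGroup.lift
    (fun i : Fin d => uni (NX k n i) (NX_sq (i : ℕ)) (Multiplicative.ofAdd 1)) w with hU
  have h2 : ∃ a b, U.val a b - (1 : Matrix _ _ (Polynomial k)) a b ≠ 0 := by
    by_contra! hcon
    exact h1 (Units.ext (by ext1 a b; exact sub_eq_zero.1 (hcon a b)))
  obtain ⟨a, b, hab⟩ := h2
  obtain ⟨T, hT⟩ : ∃ T : k, (U.val a b - (1 : Matrix _ _ (Polynomial k)) a b).eval T ≠ 0 := by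
    by_contra! hcon
    exact hab (Polynomial.funext (by simpa using hcon))
  let E : GL (Fin (n + 2)) (Polynomial k) →* GL (Fin (n + 2)) k :=
    Matrix.GeneralLinearGroup.map (Polynomial.evalRingHom T)
  let h : Fin d → GL (Fin (n + 2)) k := fun i => E (uni (NX k n i) (NX_sq (i : ℕ)) (Multiplicative.ofAdd 1))
  have hEU : E U = FreeGroup.lift h w := by
    have : E.comp (FreeGroup.lift
      (fun i : Fin d => uni (NX k n i) (NX_sq (i : ℕ)) (Multiplicative.ofAdd 1))) = FreeGroup.lift h := by
      ext1 i; simp [h]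
    exact DFunLike.congr_fun this w
  have hne : FreeGroup.lift h w ≠ 1 := by
    rw [← hEU]
    intro hcon
    apply hT
    have : (E U).val a b = (1 : GL (Fin (n + 2)) k).val a b := by rw [hcon]
    have e1 : (E U).val a b = (U.val a b).eval T := rfl
    rw [e1] at this
    rw [Polynomial.eval_sub, this, Matrix.one_apply]
    simp [Matrix.one_apply]
    split_ifs <;> simp
  have hval : ∀ i, (h i).val = 1 + T • NN k n i := by
    intro i
    ext a b
    simp [h, E, uni, NX, Matrix.GeneralLinearGroup.map, Matrix.one_apply]
    split_ifs <;> simp [mul_comm]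
  let ps : Fin (n + 2) → k := fun a => if a = 0 then 1 else 0
  have hps : ∀ i : ℕ, ps ⬝ᵥ vv k n i = 1 := by
    intro i; simp [ps, vv, dotProduct, Fin.sum_univ_succ]
  have hvph : ∀ i : ℕ, ph k n i ⬝ᵥ vv k n i = 0 := by
    intro i; simp [ph_dot_vv]
  let Q : ℕ → Matrix (Fin (n + 2)) (Fin (n + 2)) k := fun i => vecMulVec (vv k n i) ps
  have hQQ : ∀ i, Q i * Q i = Q i := by
    intro i; simp [Q, vecMulVec_mul_vecMulVec, hps]
  have hQN : ∀ i, Q i * NN k n i = NN k n i := by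
    intro i; simp [Q, NN, vecMulVec_mul_vecMulVec, hps]
  have hNQ : ∀ i, NN k n i * Q i = 0 := by
    intro i; simp [Q, NN, vecMulVec_mul_vecMulVec, hvph]
  have h2 : (2 : k) ≠ 0 := two_ne_zero
  let S : ℕ → GL (Fin (n + 2)) k := fun i => ⟨1 + Q i, 1 - (2⁻¹ : k) • Q i, by
      simp only [add_mul, mul_sub, mul_smul_comm, hQQ, mul_one, one_mul]
      match_scalars <;> field_simp <;> norm_num, by
      simp only [sub_mul, mul_add, smul_mul_assoc, hQQ, mul_one, one_mul]
      match_scalars <;> field_simp <;> norm_num⟩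
  refine ⟨fun p => if p.2 then S p.1 else h p.1, ?_⟩
  rw [lift_commW]
  convert hne using 4 with i
  have : S i * h i = h i * h i * S i := by
    apply Units.ext
    simp only [Units.val_mul, hval]
    change (1 + Q i) * _ = _ * (1 + Q i)
    simp only [add_mul, mul_add, mul_smul_comm, smul_mul_assoc, hQN, hNQ, NN_sq, mul_one, one_mul,
      smul_zero, add_zero]
    module
  simp only [if_true, Bool.false_eq_true, if_false]
  rw [this]
  group

end Free
end BorelSL

namespace BorelSL

open Matrix Polynomial

section Words

variable {R : Type*} [CommRing R] {σ : Type*} {ι : Type*} [Fintype ι] [DecidableEq ι]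

/-- numerator of a word evaluated at matrices -/
def numW (a : σ → Matrix ι ι R) (L : List (σ × Bool)) : Matrix ι ι R :=
  (L.map (fun x => if x.2 then a x.1 else adjugate (a x.1))).prod

/-- denominator of a word evaluated at matrices -/
def denW (a : σ → Matrix ι ι R) (L : List (σ × Bool)) : R :=
  (L.map (fun x => if x.2 then 1 else det (a x.1))).prod

lemma numW_cons (a : σ → Matrix ι ι R) (x : σ × Bool) (L : List (σ × Bool)) :
    numW a (x :: L) = (if x.2 then a x.1 else adjugate (a x.1)) * numW a L := by
  simp [numW]

lemma denW_cons (a : σ → Matrix ι ι R) (x : σ × Bool) (L : List (σ × Bool)) :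
    denW a (x :: L) = (if x.2 then 1 else det (a x.1)) * denW a L := by
  simp [denW]

lemma numW_map {S : Type*} [CommRing S] (f : R →+* S) (a : σ → Matrix ι ι R) (L : List (σ × Bool)) :
    f.mapMatrix (numW a L) = numW (fun s => f.mapMatrix (a s)) L := by
  induction L with
  | nil => simp [numW]
  | cons x L ih =>
    rw [numW_cons, numW_cons, map_mul, ih]
    split_ifs with h
    · rfl
    · rw [RingHom.map_adjugate]

lemma denW_map {S : Type*} [CommRing S] (f : R →+* S) (a : σ → Matrix ι ι R) (L : List (σ × Bool)) :
    f (denW a L) = denW (fun s => f.mapMatrix (a s)) L := by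
  induction L with
  | nil => simp [denW]
  | cons x L ih =>
    rw [denW_cons, denW_cons, map_mul, ih]
    split_ifs with h
    · simp
    · rw [RingHom.map_det]

lemma den_smul_lift (g : σ → GL ι R) (L : List (σ × Bool)) :
    denW (fun s => (g s).val) L • (FreeGroup.lift g (FreeGroup.mk L)).val
      = numW (fun s => (g s).val) L := by
  induction L with
  | nil => simp [denW, numW, ← FreeGroup.one_eq_mk]
  | cons x L ih =>
    have : FreeGroup.lift g (FreeGroup.mk (x :: L)) =
        (if x.2 then g x.1 else (g x.1)⁻¹) * FreeGroup.lift g (FreeGroup.mk L) := by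
      rw [FreeGroup.lift_mk, FreeGroup.lift_mk]
      rcases x with ⟨x, _ | _⟩ <;> simp
    rw [this, numW_cons, denW_cons, Units.val_mul, ← smul_mul_smul_comm, ih]
    congr 1
    split_ifs with h
    · simp
    · have h1 : (g x.1).val * adjugate (g x.1).val = (det (g x.1).val) • 1 := mul_adjugate _
      have h2 : (g x.1)⁻¹.val * (g x.1).val = 1 := by
        rw [← Units.val_mul]; simp
      calc det (g x.1).val • (g x.1)⁻¹.val = (g x.1)⁻¹.val * (det (g x.1).val • 1) := by simp
        _ = _ := by rw [← h1, ← mul_assoc, h2, one_mul]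

lemma denW_ne_zero [IsDomain R] (a : σ → Matrix ι ι R) (ha : ∀ s, det (a s) ≠ 0) (L : List (σ × Bool)) :
    denW a L ≠ 0 := by
  induction L with
  | nil => simp [denW]
  | cons x L ih =>
    rw [denW_cons]
    refine mul_ne_zero ?_ ih
    split_ifs
    · exact one_ne_zero
    · exact ha _

end Words

section Trailing

variable {R : Type*} [CommRing R] {ι : Type*} [Fintype ι] [DecidableEq ι]

lemma det_ne_zero_of_trailing (M : Matrix ι ι R[X]) (j : ℕ)
    (h0 : ∀ l < j, ∀ p q, (M p q).coeff l = 0)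
    (hj : (M.map (fun f => f.coeff j)).det ≠ 0) : M.det ≠ 0 := by
  have hd : ∀ p q, ∃ f : R[X], M p q = X ^ j * f := by
    intro p q
    exact (X_pow_dvd_iff.2 fun l hl => h0 l hl p q)
  choose f hf using hd
  have hM : M = (X ^ j : R[X]) • (Matrix.of f) := by
    ext1 p q
    simp [hf]
  have hc : M.map (fun f => f.coeff j) = (evalRingHom (0 : R)).mapMatrix (Matrix.of f) := by
    ext p q
    simp [hf, coeff_X_pow_mul', coeff_zero_eq_eval_zero]
  rw [hM, det_smul]
  intro h
  apply hj
  rw [hc, ← RingHom.map_det]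
  have : (Matrix.of f).det = 0 := by
    rw [← pow_mul] at h
    exact (Polynomial.isRegular_X_pow _).left.mul_left_eq_zero_iff.1 h
  rw [this, map_zero]

lemma exists_trailing (M : Matrix ι ι R[X]) (hM : M ≠ 0) :
    ∃ j : ℕ, (∀ l < j, ∀ p q, (M p q).coeff l = 0) ∧ ∃ p q, (M p q).coeff j ≠ 0 := by
  classical
  have : ∃ j : ℕ, ∃ p q, (M p q).coeff j ≠ 0 := by
    by_contra! h
    apply hM
    ext p q j
    simp [h]
  refine ⟨Nat.find this, ?_, Nat.find_spec this⟩
  intro l hl p q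
  have := Nat.find_min this hl
  push Not at this
  exact this p q

end Trailing

section Quantum

variable {k : Type*} [Field k] {m : ℕ} {z : k}

/-- scaling the inner variable -/
noncomputable def al (c : k) : k[X][X] →+* k[X][X] := mapRingHom (compRingHom (C c * X))

/-- scaling the outer variable -/
noncomputable def be (c : k) : k[X][X] →+* k[X][X] := compRingHom (C (C c) * X)

lemma coeff_al (c : k) (f : k[X][X]) (j i : ℕ) :
    ((al c f).coeff j).coeff i = (f.coeff j).coeff i * c ^ i := by
  simp [al, comp_C_mul_X_coeff]

lemma coeff_be (c : k) (f : k[X][X]) (j i : ℕ) :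
    ((be c f).coeff j).coeff i = (f.coeff j).coeff i * c ^ j := by
  rw [be, coe_compRingHom_apply, comp_C_mul_X_coeff, ← C_pow, coeff_mul_C]

/-- the clock matrix -/
noncomputable def clock (z : k) (m : ℕ) : Matrix (Fin (m + 1)) (Fin (m + 1)) k[X][X] :=
  diagonal (fun p => C (C (z ^ p.val)))

/-- elements of the quantum plane -/
structure Eqv (z : k) (M : Matrix (Fin (m + 1)) (Fin (m + 1)) k[X][X]) : Prop where
  h1 : clock z m * M = (be z).mapMatrix M * clock z m
  h2 : ∀ s : Fin (m + 1), M.submatrix (Equiv.addRight s) (Equiv.addRight s)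
    = (al (z ^ s.val)).mapMatrix M

lemma z_add (hz : IsPrimitiveRoot z (m + 1)) (a b : Fin (m + 1)) : z ^ (a + b).val = z ^ a.val * z ^ b.val := by
  rw [Fin.val_add, ← pow_add]
  conv_rhs => rw [← Nat.mod_add_div (a.val + b.val) (m + 1), pow_add, pow_mul, hz.pow_eq_one]
  simp

lemma z_inj (hz : IsPrimitiveRoot z (m + 1)) {a b : Fin (m + 1)} (h : z ^ a.val = z ^ b.val) : a = b :=
  Fin.ext (hz.pow_inj a.isLt b.isLt h)

lemma z_ne (hz : IsPrimitiveRoot z (m + 1)) : z ≠ 0 := hz.ne_zero (by simp)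

lemma Eqv.mul {M M' : Matrix (Fin (m + 1)) (Fin (m + 1)) k[X][X]} (h : Eqv z M) (h' : Eqv z M') :
    Eqv z (M * M') where
  h1 := by rw [← mul_assoc, h.h1, mul_assoc, h'.h1, ← mul_assoc, map_mul]
  h2 s := by
    rw [← submatrix_mul_equiv _ _ _ (Equiv.addRight s), h.h2, h'.h2, map_mul]

lemma Eqv.sub {M M' : Matrix (Fin (m + 1)) (Fin (m + 1)) k[X][X]} (h : Eqv z M) (h' : Eqv z M') :
    Eqv z (M - M') where
  h1 := by rw [mul_sub, h.h1, h'.h1, map_sub, sub_mul]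
  h2 s := by
    rw [submatrix_sub, Pi.sub_apply, Pi.sub_apply, h.h2, h'.h2, map_sub]

lemma clock_isUnit (hz : IsPrimitiveRoot z (m + 1)) : IsUnit (clock z m) := by
  rw [clock, isUnit_diagonal, Pi.isUnit_iff]
  intro p
  refine IsUnit.map C (IsUnit.map C ?_)
  exact (IsUnit.mk0 _ (z_ne hz)).pow _

lemma Eqv.adj (hz : IsPrimitiveRoot z (m + 1)) {M : Matrix (Fin (m + 1)) (Fin (m + 1)) k[X][X]} (h : Eqv z M) :
    Eqv z (adjugate M) where
  h1 := by
    have e := congrArg adjugate h.h1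
    rw [adjugate_mul_distrib, adjugate_mul_distrib, ← RingHom.map_adjugate] at e
    have hu := clock_isUnit (z := z) (m := m) hz
    have hd : IsUnit (clock z m).det := (isUnit_iff_isUnit_det _).1 hu
    have e2 : clock z m * (adjugate M * adjugate (clock z m)) * clock z m =
      clock z m * (adjugate (clock z m) * (be z).mapMatrix (adjugate M)) * clock z m := by rw [e]
    have e3 : (clock z m).det • (clock z m * adjugate M) =
        (clock z m).det • ((be z).mapMatrix (adjugate M) * clock z m) := by
      calc _ = clock z m * (adjugate M * (adjugate (clock z m) * clock z m)) := by
              rw [adjugate_mul]; simp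
        _ = clock z m * (adjugate M * adjugate (clock z m)) * clock z m := by
              simp only [mul_assoc]
        _ = (clock z m * adjugate (clock z m)) * (be z).mapMatrix (adjugate M) * clock z m := by
              rw [e2]; simp only [mul_assoc]
        _ = _ := by rw [mul_adjugate]; simp
    exact hd.smul_left_cancel.1 e3
  h2 s := by
    rw [RingHom.map_adjugate, ← h.h2, adjugate_submatrix_equiv_self]

lemma Eqv.det_smul (hz : IsPrimitiveRoot z (m + 1)) {M : Matrix (Fin (m + 1)) (Fin (m + 1)) k[X][X]} (h : Eqv z M) :
    Eqv z (M.det • (1 : Matrix (Fin (m + 1)) (Fin (m + 1)) k[X][X])) := by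
  rw [← mul_adjugate]
  exact h.mul (h.adj hz)

lemma Eqv.one : Eqv z (1 : Matrix (Fin (m + 1)) (Fin (m + 1)) k[X][X]) where
  h1 := by simp
  h2 s := by rw [submatrix_one_equiv, map_one]

lemma eqv_word (hz : IsPrimitiveRoot z (m + 1)) {σ : Type*} (a : σ → Matrix (Fin (m + 1)) (Fin (m + 1)) k[X][X])
    (ha : ∀ s, Eqv z (a s)) (L : List (σ × Bool)) :
    Eqv z (numW a L) ∧ Eqv z (denW a L • (1 : Matrix (Fin (m + 1)) (Fin (m + 1)) k[X][X])) := by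
  induction L with
  | nil => simpa [numW, denW] using Eqv.one
  | cons x L ih =>
    rw [numW_cons, denW_cons]
    constructor
    · refine Eqv.mul ?_ ih.1
      split_ifs
      · exact ha _
      · exact (ha _).adj hz
    · have : ((if x.2 then 1 else det (a x.1)) * denW a L) •
        (1 : Matrix (Fin (m + 1)) (Fin (m + 1)) k[X][X]) =
        ((if x.2 then 1 else det (a x.1)) • 1) * (denW a L • 1) := by
        rw [smul_mul_smul_comm, one_mul]
      rw [this]
      refine Eqv.mul ?_ ih.2
      split_ifs
      · simpa using Eqv.one
      · exact (ha _).det_smul hz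

lemma Eqv.det_ne_zero (hz : IsPrimitiveRoot z (m + 1)) {M : Matrix (Fin (m + 1)) (Fin (m + 1)) k[X][X]} (h : Eqv z M) (hM : M ≠ 0) :
    M.det ≠ 0 := by
  obtain ⟨j, hj0, p0, q0, hj⟩ := exists_trailing M hM
  refine det_ne_zero_of_trailing M j hj0 ?_
  have hne : M.map (fun f => f.coeff j) ≠ 0 := by
    intro h0
    exact hj (congrFun (congrFun h0 p0) q0)
  obtain ⟨i, hi0, p, q, hi⟩ := exists_trailing _ hne
  refine det_ne_zero_of_trailing _ i hi0 ?_
  set B := (M.map (fun f => f.coeff j)).map (fun f => f.coeff i) with hB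
  have hBpq : B p q ≠ 0 := hi
  have r1 : ∀ a b, B a b ≠ 0 → z ^ a.val = z ^ j * z ^ b.val := by
    intro a b hab
    have e := congrFun (congrFun h.h1 a) b
    simp only [clock, diagonal_mul, mul_diagonal, RingHom.mapMatrix_apply, Matrix.map_apply] at e
    have e2 := congrArg (fun f : k[X][X] => (f.coeff j).coeff i) e
    simp only [coeff_C_mul, coeff_mul_C, coeff_be] at e2
    have : z ^ a.val * B a b = B a b * (z ^ j * z ^ b.val) := by
      simp only [hB, Matrix.map_apply]
      rw [e2]; ring
    rw [mul_comm] at this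
    exact mul_left_cancel₀ hab this
  have r2 : ∀ s a b, B (a + s) (b + s) = B a b * (z ^ s.val) ^ i := by
    intro s a b
    have e := congrFun (congrFun (h.h2 s) a) b
    simp only [submatrix_apply, RingHom.mapMatrix_apply, Matrix.map_apply, Equiv.coe_addRight] at e
    simp only [hB, Matrix.map_apply]
    rw [e, coeff_al]
  have hzne := z_ne hz
  have r3 : ∀ s, B (p + s) (q + s) ≠ 0 := by
    intro s
    rw [r2]
    exact mul_ne_zero hBpq (pow_ne_zero _ (pow_ne_zero _ hzne))
  intro hdet
  obtain ⟨v, hv, hBv⟩ := Matrix.exists_mulVec_eq_zero_iff.2 hdet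
  apply hv
  ext b
  have e := congrFun hBv (p + (b - q))
  rw [mulVec, dotProduct, Finset.sum_eq_single b] at e
  · have := r3 (b - q)
    rw [add_sub_cancel] at this
    simpa [this] using e
  · intro b' _ hb'
    have : B (p + (b - q)) b' = 0 := by
      by_contra hcon
      have e1 := r1 _ _ hcon
      have e2 := r1 _ _ (r3 (b - q))
      rw [add_sub_cancel, e1] at e2
      exact hb' (z_inj hz (mul_left_cancel₀ (pow_ne_zero _ hzne) e2))
    rw [this, zero_mul]
  · simp

/-- evaluation at a point -/
noncomputable def ev2 (x y : k) : k[X][X] →+* k := (evalRingHom y).comp (mapRingHom (evalRingHom x))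

lemma exists_eqv (hz : IsPrimitiveRoot z (m + 1)) (G : Matrix (Fin (m + 1)) (Fin (m + 1)) k) :
    ∃ a : Matrix (Fin (m + 1)) (Fin (m + 1)) k[X][X], Eqv z a ∧ (ev2 1 1).mapMatrix a = G := by
  classical
  let h : Fin (m + 1) → k[X] := fun r =>
    Lagrange.interpolate Finset.univ (fun q : Fin (m + 1) => z ^ q.val) (fun q => G (q + r) q)
  have hh : ∀ r q, (h r).eval (z ^ q.val) = G (q + r) q := by
    intro r q
    refine Lagrange.eval_interpolate_at_node (v := fun q : Fin (m + 1) => z ^ q.val) _ ?_ (Finset.mem_univ q)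
    intro a _ b _ hab
    exact z_inj hz hab
  refine ⟨Matrix.of fun p q => X ^ (p - q).val * C ((h (p - q)).comp (C (z ^ q.val) * X)), ⟨?_, ?_⟩, ?_⟩
  · ext1 p q
    have : (C (C z) : k[X][X]) ^ p.val = C (C z) ^ (p - q).val * C (C z) ^ q.val := by
      simp only [← C_pow, ← C_mul]
      rw [← z_add hz, sub_add_cancel]
    simp only [clock, diagonal_mul, mul_diagonal, RingHom.mapMatrix_apply, Matrix.map_apply, of_apply,
      this, be, coe_compRingHom_apply, mul_comp, pow_comp, X_comp, C_comp, C_pow, mul_pow]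
    ring
  · intro s
    ext1 p q
    simp only [submatrix_apply, RingHom.mapMatrix_apply, Matrix.map_apply, Equiv.coe_addRight, of_apply,
      add_sub_add_right_eq_sub, z_add hz, al, coe_mapRingHom, Polynomial.map_mul, Polynomial.map_pow,
      map_X, map_C, coe_compRingHom_apply, comp_assoc, mul_comp, C_comp, X_comp, C_mul, mul_assoc]
  · ext p q
    simp [ev2, hh]

lemma exists_ev2 [Infinite k] (f : k[X][X]) (hf : f ≠ 0) : ∃ x y, ev2 x y f ≠ 0 := by
  obtain ⟨j, hj⟩ : ∃ j, f.coeff j ≠ 0 := by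
    by_contra! h
    exact hf (by ext1 j; simpa using h j)
  obtain ⟨x, hx⟩ : ∃ x, (f.coeff j).eval x ≠ 0 := by
    by_contra! h
    exact hj (Polynomial.funext (by simpa using h))
  have h1 : f.map (evalRingHom x) ≠ 0 := by
    intro h
    apply hx
    have := congrArg (fun g => coeff g j) h
    simpa using this
  obtain ⟨y, hy⟩ : ∃ y, (f.map (evalRingHom x)).eval y ≠ 0 := by
    by_contra! h
    exact h1 (Polynomial.funext (by simpa using h))
  exact ⟨x, y, hy⟩

/-- The key non-vanishing result, via quantum planes (division algebras of degree `m + 1`). -/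
lemma exists_det_sub_one_ne_zero (hz : IsPrimitiveRoot z (m + 1)) [Infinite k] {σ : Type*} [Fintype σ] (w : FreeGroup σ)
    (G : σ → GL (Fin (m + 1)) k) (hG : FreeGroup.lift G w ≠ 1) :
    ∃ g : σ → GL (Fin (m + 1)) k, ((FreeGroup.lift g w).val - 1).det ≠ 0 := by
  classical
  obtain ⟨L, rfl⟩ : ∃ L, FreeGroup.mk L = w := ⟨w.toWord, FreeGroup.mk_toWord⟩
  choose a ha1 ha2 using fun s => exists_eqv hz (G s).val
  set M := numW a L - denW a L • 1 with hM
  have hE : Eqv z M := (eqv_word hz a ha1 L).1.sub (eqv_word hz a ha1 L).2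
  have key : ∀ x y (g : σ → GL (Fin (m + 1)) k), (∀ s, (ev2 x y).mapMatrix (a s) = (g s).val) →
      (ev2 x y).mapMatrix M = denW (fun s => (g s).val) L • ((FreeGroup.lift g (FreeGroup.mk L)).val - 1) := by
    intro x y g hg
    have hg' : (fun s => (ev2 x y).mapMatrix (a s)) = fun s => (g s).val := funext hg
    have e1 : (ev2 x y).mapMatrix (denW a L • (1 : Matrix (Fin (m + 1)) (Fin (m + 1)) k[X][X])) =
        denW (fun s => (g s).val) L • 1 := by
      rw [← hg', ← denW_map]
      ext p q
      simp [Matrix.one_apply]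
      split_ifs <;> simp
    rw [hM, map_sub, e1, numW_map, hg', smul_sub, den_smul_lift]
  have hdetG : ∀ (g : GL (Fin (m + 1)) k), g.val.det ≠ 0 := fun g =>
    ((isUnit_iff_isUnit_det _).1 g.isUnit).ne_zero
  have hM0 : M ≠ 0 := by
    intro h0
    have e := key 1 1 G ha2
    rw [h0, map_zero] at e
    have e2 := (smul_eq_zero.1 e.symm).resolve_left (denW_ne_zero _ (fun s => hdetG _) L)
    exact hG (Units.ext (sub_eq_zero.1 e2))
  have hdet := hE.det_ne_zero hz hM0
  have hda : ∀ s, (a s).det ≠ 0 := by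
    intro s h0
    have : ((ev2 1 1).mapMatrix (a s)).det = 0 := by rw [← RingHom.map_det, h0, map_zero]
    rw [ha2] at this
    exact hdetG _ this
  obtain ⟨x, y, hxy⟩ := exists_ev2 (M.det * ∏ s, (a s).det)
    (mul_ne_zero hdet (Finset.prod_ne_zero_iff.2 fun s _ => hda s))
  rw [map_mul, map_prod] at hxy
  have hs : ∀ s, ((ev2 x y).mapMatrix (a s)).det ≠ 0 := by
    intro s
    rw [← RingHom.map_det]
    exact Finset.prod_ne_zero_iff.1 (right_ne_zero_of_mul hxy) s (Finset.mem_univ s)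
  refine ⟨fun s => Matrix.GeneralLinearGroup.mkOfDetNeZero _ (hs s), ?_⟩
  have e := key x y (fun s => Matrix.GeneralLinearGroup.mkOfDetNeZero _ (hs s)) (fun s => rfl)
  intro h0
  apply left_ne_zero_of_mul hxy
  rw [RingHom.map_det, e, Matrix.det_smul, h0, mul_zero]

end Quantum
end BorelSL

namespace BorelSL

open Matrix

section Pe

variable {k : Type*} [Field k] {ι : Type*} {S T : Type*} [CommRing S] [Algebra k S]
  [CommRing T] [Algebra k T]

/-- evaluation of a polynomial in matrix entries -/
noncomputable def pe (P : MvPolynomial (ι × ι) k) (M : Matrix ι ι S) : S :=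
  MvPolynomial.aeval (fun ij => M ij.1 ij.2) P

lemma pe_map (f : S →ₐ[k] T) (P : MvPolynomial (ι × ι) k) (M : Matrix ι ι S) :
    f (pe P M) = pe P (M.map f) := by
  rw [pe, pe, ← AlgHom.comp_apply, MvPolynomial.comp_aeval]
  rfl

lemma pe_mul (P Q : MvPolynomial (ι × ι) k) (M : Matrix ι ι S) :
    pe (P * Q) M = pe P M * pe Q M := by
  simp [pe]

/-- the generic matrix -/
noncomputable def gm (k : Type*) [Field k] (ι : Type*) : Matrix ι ι (MvPolynomial (ι × ι) k) :=
  Matrix.of fun i j => MvPolynomial.X (i, j)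

/-- evaluation at a matrix as an algebra hom -/
noncomputable def evM (M : Matrix ι ι S) : MvPolynomial (ι × ι) k →ₐ[k] S :=
  MvPolynomial.aeval (fun ij => M ij.1 ij.2)

lemma evM_apply (M : Matrix ι ι S) (P : MvPolynomial (ι × ι) k) : pe P M = evM M P := rfl

lemma gm_map (M : Matrix ι ι S) : (gm k ι).map (evM (k := k) M) = M := by
  ext i j
  simp [gm, evM]

lemma irred_of [IsDomain S] (hsep : ∀ r : S, (∀ φ : S →ₐ[k] k, φ r = 0) → r = 0)
    (M : Matrix ι ι S) (P Q : MvPolynomial (ι × ι) k)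
    (h : ∀ φ : S →ₐ[k] k, pe P (M.map φ) * pe Q (M.map φ) = 0) :
    (∀ φ : S →ₐ[k] k, pe P (M.map φ) = 0) ∨ (∀ φ : S →ₐ[k] k, pe Q (M.map φ) = 0) := by
  have : pe P M * pe Q M = 0 := by
    apply hsep
    intro φ
    rw [map_mul, pe_map, pe_map, h]
  rcases mul_eq_zero.1 this with h | h
  · left; intro φ; rw [← pe_map, h, map_zero]
  · right; intro φ; rw [← pe_map, h, map_zero]

end Pe

universe u

lemma exists_generic {k : Type u} [Field k] [Infinite k] (σ : Type) [Fintype σ] (N : ℕ) :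
    ∃ (R : Type u) (_ : CommRing R) (_ : IsDomain R) (_ : Algebra k R) (gen : σ → GL (Fin N) R),
      (∀ g : σ → GL (Fin N) k, ∃ φ : R →ₐ[k] k, ∀ s,
        Matrix.GeneralLinearGroup.map (φ : R →+* k) (gen s) = g s) ∧
      (∀ r : R, (∀ φ : R →ₐ[k] k, φ r = 0) → r = 0) := by
  classical
  let A := MvPolynomial (σ × Fin N × Fin N) k
  let gA : σ → Matrix (Fin N) (Fin N) A := fun s => Matrix.of fun i j => MvPolynomial.X (s, i, j)
  let D : A := ∏ s, (gA s).det
  have hev : ∀ (x : σ × Fin N × Fin N → k) s,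
      MvPolynomial.aeval x (gA s).det = (Matrix.of fun i j => x (s, i, j)).det := by
    intro x s
    rw [AlgHom.map_det]
    congr 1
    ext i j
    simp [gA]
  have hD : D ≠ 0 := by
    intro h0
    have : MvPolynomial.aeval (fun t : σ × Fin N × Fin N => if t.2.1 = t.2.2 then (1 : k) else 0) D = 0 := by
      rw [h0, map_zero]
    rw [map_prod] at this
    obtain ⟨s, _, hs⟩ := Finset.prod_eq_zero_iff.1 this
    rw [hev] at hs
    have e : (Matrix.of fun i j : Fin N => if i = j then (1 : k) else 0) = 1 := by
      ext i j; simp [Matrix.one_apply]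
    simp only [e, det_one, one_ne_zero] at hs
  let R := Localization.Away D
  have hle : Submonoid.powers D ≤ nonZeroDivisors A :=
    powers_le_nonZeroDivisors_of_noZeroDivisors hD
  have hdom : IsDomain R := IsLocalization.isDomain_localization hle
  have hu : ∀ s, IsUnit ((algebraMap A R).mapMatrix (gA s)) := by
    intro s
    rw [isUnit_iff_isUnit_det, ← RingHom.map_det]
    have h1 : IsUnit (algebraMap A R D) := IsLocalization.Away.algebraMap_isUnit D
    rw [map_prod] at h1
    exact isUnit_of_dvd_unit (Finset.dvd_prod_of_mem (fun x => algebraMap A R (gA x).det) (Finset.mem_univ s)) h1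
  have hpt : ∀ x : σ × Fin N × Fin N → k, MvPolynomial.aeval x D ≠ 0 →
      ∃ φ : R →ₐ[k] k, ∀ a : A, φ (algebraMap A R a) = MvPolynomial.aeval x a := by
    intro x hx
    refine ⟨IsLocalization.liftAlgHom (M := Submonoid.powers D) (f := MvPolynomial.aeval x) ?_, ?_⟩
    · rintro ⟨_, r, rfl⟩
      simp only [map_pow]
      exact (IsUnit.mk0 _ hx).pow r
    · intro a
      exact IsLocalization.lift_eq _ _
  refine ⟨R, inferInstance, hdom, inferInstance, fun s => (hu s).unit, ?_, ?_⟩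
  · intro g
    obtain ⟨φ, hφ⟩ := hpt (fun t => (g t.1).val t.2.1 t.2.2) (by
      rw [map_prod, Finset.prod_ne_zero_iff]
      intro s _
      rw [hev]
      exact ((isUnit_iff_isUnit_det _).1 (g s).isUnit).ne_zero)
    refine ⟨φ, fun s => ?_⟩
    ext i j
    change φ (algebraMap A R (gA s i j)) = _
    rw [hφ]
    simp [gA]
  · intro r hr
    obtain ⟨a, b, rfl⟩ := IsLocalization.exists_mk'_eq (Submonoid.powers D) r
    have ha : a * D = 0 := by
      apply MvPolynomial.funext
      intro x
      rw [map_mul, map_zero]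
      by_cases hx : MvPolynomial.aeval x D = 0
      · rw [MvPolynomial.aeval_eq_eval] at hx
        have hx' : MvPolynomial.eval x D = 0 := hx
        rw [hx', mul_zero]
      · obtain ⟨φ, hφ⟩ := hpt x hx
        have h1 := hr φ
        have h2 : φ (algebraMap A R a) = 0 := by
          rw [← IsLocalization.mk'_spec R a b, map_mul, h1, zero_mul]
        rw [hφ] at h2
        have h3 : MvPolynomial.eval x a = 0 := h2
        rw [h3, zero_mul]
    have := (mul_eq_zero.1 ha).resolve_right hD
    rw [this, IsLocalization.mk'_zero]

section Irred
variable {k : Type u} [Field k] [Infinite k] {σ : Type} [Fintype σ] {N : ℕ}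

lemma lift_map {R S : Type*} [CommRing R] [CommRing S] (f : R →+* S) (g : σ → GL (Fin N) R)
    (w : FreeGroup σ) :
    (FreeGroup.lift g w).val.map f =
      (FreeGroup.lift (fun s => Matrix.GeneralLinearGroup.map f (g s)) w).val := by
  have : (Matrix.GeneralLinearGroup.map f).comp (FreeGroup.lift g) =
    FreeGroup.lift (fun s => Matrix.GeneralLinearGroup.map f (g s)) := by
    ext1 s; simp
  rw [← this]
  rfl

lemma irred_word (w : FreeGroup σ) (P Q : MvPolynomial (Fin N × Fin N) k)
    (h : ∀ g : σ → GL (Fin N) k, pe P (FreeGroup.lift g w).val * pe Q (FreeGroup.lift g w).val = 0) :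
    (∀ g : σ → GL (Fin N) k, pe P (FreeGroup.lift g w).val = 0) ∨
    (∀ g : σ → GL (Fin N) k, pe Q (FreeGroup.lift g w).val = 0) := by
  obtain ⟨R, _, _, _, gen, h1, h2⟩ := exists_generic (k := k) σ N
  have key : ∀ φ : R →ₐ[k] k, (FreeGroup.lift gen w).val.map φ =
      (FreeGroup.lift (fun s => Matrix.GeneralLinearGroup.map (φ : R →+* k) (gen s)) w).val :=
    fun φ => lift_map (φ : R →+* k) gen w
  refine (irred_of h2 (FreeGroup.lift gen w).val P Q fun φ => ?_).imp ?_ ?_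
  · rw [key]; exact h _
  all_goals
    intro h0 g
    obtain ⟨φ, hφ⟩ := h1 g
    have := h0 φ
    rwa [key, funext hφ] at this

lemma irred_SL (P Q : MvPolynomial (Fin (N + 1) × Fin (N + 1)) k)
    (h : ∀ M : Matrix (Fin (N + 1)) (Fin (N + 1)) k, M.det = 1 → pe P M * pe Q M = 0) :
    (∀ M : Matrix (Fin (N + 1)) (Fin (N + 1)) k, M.det = 1 → pe P M = 0) ∨
    (∀ M : Matrix (Fin (N + 1)) (Fin (N + 1)) k, M.det = 1 → pe Q M = 0) := by
  obtain ⟨R, _, _, _, gen, h1, h2⟩ := exists_generic (k := k) Unit (N + 1)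
  let G := (gen ()).val
  let e : R := (gen ())⁻¹.val.det
  have he : G.det * e = 1 := by
    simp only [G, e]; rw [← det_mul, ← Units.val_mul]; simp
  let M : Matrix (Fin (N + 1)) (Fin (N + 1)) R := G * diagonal (fun i => if i = 0 then e else 1)
  have hM : M.det = 1 := by
    simp only [M]
    rw [det_mul, det_diagonal, Finset.prod_ite_eq' Finset.univ (0 : Fin (N + 1)) (fun _ => e)]
    simpa using he
  refine (irred_of h2 M P Q fun φ => ?_).imp ?_ ?_
  · apply h
    have := AlgHom.map_det φ M
    rw [hM, map_one] at this
    exact this.symm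
  all_goals
    intro h0 T hT
    have hT0 : T.det ≠ 0 := by rw [hT]; exact one_ne_zero
    obtain ⟨φ, hφ⟩ := h1 (fun _ => Matrix.GeneralLinearGroup.mkOfDetNeZero T hT0)
    have hG : G.map φ = T := congrArg Units.val (hφ ())
    have hGd : φ G.det = 1 := by
      rw [AlgHom.map_det, ← hT, ← hG]; rfl
    have he' : φ e = 1 := by
      have := congrArg φ he
      rwa [map_mul, hGd, one_mul, map_one] at this
    have hMT : M.map φ = T := by
      rw [← hG]
      ext i j
      simp only [M, Matrix.map_apply, mul_diagonal, map_mul]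
      split_ifs <;> simp [he']
    have := h0 φ
    rwa [hMT] at this

end Irred

lemma X_zero_dvd {k : Type*} [Field k] [Infinite k] {m : ℕ} (F : MvPolynomial (Fin (m + 1)) k)
    (h : ∀ c : Fin (m + 1) → k, c 0 = 0 → MvPolynomial.aeval c F = 0) :
    (MvPolynomial.X 0 : MvPolynomial (Fin (m + 1)) k) ∣ F := by
  classical
  let A := MvPolynomial (Fin (m + 1)) k
  let f : A →ₐ[k] A := MvPolynomial.aeval (fun i => if i = 0 then 0 else MvPolynomial.X i)
  have hf : f F = 0 := by
    apply MvPolynomial.funext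
    intro x
    have : MvPolynomial.aeval x (f F) =
      MvPolynomial.aeval (fun i => if i = 0 then 0 else x i) F := by
      rw [← AlgHom.comp_apply]
      congr 1
      ext i
      simp only [f, AlgHom.comp_apply, MvPolynomial.aeval_X]
      split_ifs <;> simp
    rw [h _ (by simp)] at this
    rw [map_zero]
    exact this
  let I : Ideal A := Ideal.span {MvPolynomial.X 0}
  have : (Ideal.Quotient.mkₐ k I).comp f = Ideal.Quotient.mkₐ k I := by
    ext i
    simp only [f, AlgHom.comp_apply, MvPolynomial.aeval_X]
    split_ifs with hi
    · subst hi
      rw [map_zero]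
      symm
      exact Ideal.Quotient.eq_zero_iff_mem.2 (Ideal.subset_span rfl)
    · rfl
  have h2 := DFunLike.congr_fun this F
  rw [AlgHom.comp_apply, hf, map_zero] at h2
  exact Ideal.mem_span_singleton.1 (Ideal.Quotient.eq_zero_iff_mem.1 h2.symm)

end BorelSL

namespace BorelSL

open Matrix Polynomial

section Companion

variable {R S : Type*} [CommRing R] [CommRing S]

/-- companion matrix of a monic polynomial of degree `N` -/
def compP (N : ℕ) (p : R[X]) : Matrix (Fin N) (Fin N) R :=
  Matrix.of fun i j => if j.val + 1 = N then - p.coeff i.val else if i.val = j.val + 1 then 1 else 0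

lemma compP_map (f : R →+* S) (N : ℕ) (p : R[X]) : compP N (p.map f) = (compP N p).map f := by
  ext i j
  simp only [compP, of_apply, coeff_map, Matrix.map_apply]
  split_ifs <;> simp

/-- Krylov matrix -/
def kry {N : ℕ} (M : Matrix (Fin N) (Fin N) R) (v : Fin N → R) : Matrix (Fin N) (Fin N) R :=
  Matrix.of fun i j => ((M ^ j.val) *ᵥ v) i

lemma kry_map (f : R →+* S) {N : ℕ} (M : Matrix (Fin N) (Fin N) R) (v : Fin N → R) :
    (kry M v).map f = kry (M.map f) (f ∘ v) := by
  ext i j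
  simp only [kry, of_apply, Matrix.map_apply]
  rw [RingHom.map_mulVec]
  have : (M ^ j.val).map f = (M.map f) ^ j.val := map_pow f.mapMatrix M j.val
  rw [this]

lemma aeval_mulVec {N : ℕ} (M : Matrix (Fin N) (Fin N) R) (v : Fin N → R) (p : R[X]) (r : ℕ)
    (hp : p.natDegree < r) :
    (aeval M p) *ᵥ v = ∑ i ∈ Finset.range r, p.coeff i • ((M ^ i) *ᵥ v) := by
  rw [aeval_eq_sum_range' hp, sum_mulVec]
  simp [smul_mulVec]

lemma monic_aeval {N : ℕ} (M : Matrix (Fin N) (Fin N) R) (v : Fin N → R) (p : R[X]) (hp : p.Monic)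
    (r : ℕ) (hr : p.natDegree = r) :
    (aeval M p) *ᵥ v = (∑ i : Fin r, p.coeff i • ((M ^ i.val) *ᵥ v)) + (M ^ r) *ᵥ v := by
  rw [aeval_mulVec M v p (r + 1) (by omega), Finset.sum_range_succ, Finset.sum_range]
  congr 1
  rw [← hr, hp.coeff_natDegree, one_smul]

lemma mul_kry {m : ℕ} (M : Matrix (Fin (m + 1)) (Fin (m + 1)) R) (v : Fin (m + 1) → R) :
    M * kry M v = kry M v * compP (m + 1) M.charpoly := by
  nontriviality R
  ext i j
  have hL : (M * kry M v) i j = ((M ^ (j.val + 1)) *ᵥ v) i := by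
    rw [pow_succ', ← mulVec_mulVec]
    rfl
  rw [hL, mul_apply]
  by_cases hj : j.val + 1 = m + 1
  · have h1 := monic_aeval M v M.charpoly M.charpoly_monic (m + 1)
      (by rw [charpoly_natDegree_eq_dim, Fintype.card_fin])
    rw [aeval_self_charpoly, zero_mulVec] at h1
    have h2 := congrFun h1 i
    simp only [Pi.zero_apply, Pi.add_apply, Finset.sum_apply, Pi.smul_apply, smul_eq_mul] at h2
    rw [hj, ← neg_eq_of_add_eq_zero_right h2.symm, ← Finset.sum_neg_distrib]
    refine Finset.sum_congr rfl fun x _ => ?_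
    simp only [compP, kry, of_apply, if_pos hj]
    ring
  · have hlt : j.val + 1 < m + 1 := by omega
    rw [Finset.sum_eq_single ⟨j.val + 1, hlt⟩]
    · have hj' : j.val ≠ m := by omega
      simp [compP, kry, hj']
    · intro b _ hb
      have : b.val ≠ j.val + 1 := fun h => hb (Fin.ext h)
      simp only [compP, kry, of_apply, if_neg hj, if_neg this, mul_zero]
    · simp

lemma compP_pow (m : ℕ) (p : R[X]) (j : ℕ) (hj : j < m + 1) :
    (compP (m + 1) p ^ j) *ᵥ (Pi.single 0 1) = Pi.single (⟨j, hj⟩ : Fin (m + 1)) 1 := by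
  induction j with
  | zero => rw [pow_zero, one_mulVec]; rfl
  | succ j ih =>
    rw [pow_succ', ← mulVec_mulVec, ih (by omega), mulVec_single_one]
    ext i
    have h1 : j ≠ m := by omega
    simp [compP, h1, Pi.single_apply, Fin.ext_iff]

lemma charpoly_compP (m : ℕ) (p : R[X]) (hp : p.Monic) (hd : p.natDegree = m + 1) :
    (compP (m + 1) p).charpoly = p := by
  nontriviality R
  set Cm := compP (m + 1) p with hC
  have hcd : Cm.charpoly.natDegree = m + 1 := by
    rw [charpoly_natDegree_eq_dim, Fintype.card_fin]
  have hlt : (Cm.charpoly - p).degree < ((m + 1 : ℕ) : WithBot ℕ) := by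
    have := degree_sub_lt_left (p := Cm.charpoly) (q := p)
      (by rw [degree_eq_natDegree Cm.charpoly_monic.ne_zero, degree_eq_natDegree hp.ne_zero, hcd, hd])
      Cm.charpoly_monic.ne_zero (by rw [Cm.charpoly_monic.leadingCoeff, hp.leadingCoeff])
    rwa [degree_eq_natDegree Cm.charpoly_monic.ne_zero, hcd] at this
  have hp0 : (aeval Cm p) *ᵥ (Pi.single 0 1) = 0 := by
    rw [monic_aeval Cm _ p hp (m + 1) hd, pow_succ', ← mulVec_mulVec, compP_pow m p m (by omega),
      mulVec_single_one]
    ext i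
    simp only [Pi.add_apply, Finset.sum_apply, Pi.smul_apply, smul_eq_mul, Pi.zero_apply]
    rw [Finset.sum_eq_single i]
    · rw [hC, compP_pow m p i.val i.isLt]
      simp [compP]
    · intro b _ hb
      rw [hC, compP_pow m p b.val b.isLt]
      simp [Pi.single_apply, hb.symm]
    · simp
  have h0 : (aeval Cm (Cm.charpoly - p)) *ᵥ (Pi.single 0 1) = 0 := by
    rw [map_sub, sub_mulVec, hp0, aeval_self_charpoly, zero_mulVec, sub_zero]
  have hz : Cm.charpoly - p = 0 := by
    have hnd : (Cm.charpoly - p).natDegree < m + 1 := by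
      by_cases h : Cm.charpoly - p = 0
      · rw [h]; simp
      · exact (natDegree_lt_iff_degree_lt h).2 hlt
    rw [aeval_mulVec Cm _ _ (m + 1) hnd, Finset.sum_range] at h0
    ext i
    by_cases hi : i < m + 1
    · have := congrFun h0 ⟨i, hi⟩
      simp only [Finset.sum_apply, Pi.smul_apply, smul_eq_mul, Pi.zero_apply] at this
      rw [Finset.sum_eq_single ⟨i, hi⟩] at this
      · rw [hC, compP_pow m p i hi] at this
        simpa using this
      · intro b _ hb
        rw [hC, compP_pow m p b.val b.isLt]
        simp [Pi.single_apply, hb.symm]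
      · simp
    · rw [coeff_zero]
      exact coeff_eq_zero_of_natDegree_lt (by omega)
  exact sub_eq_zero.1 hz

/-- coordinates on the space of characteristic polynomials -/
noncomputable def ccM {m : ℕ} (M : Matrix (Fin (m + 2)) (Fin (m + 2)) R) (i : Fin (m + 1)) : R :=
  if i = 0 then M.charpoly.eval 1 else (M.charpoly /ₘ (X - C 1)).coeff i.val

lemma ccM_map (f : R →+* S) {m : ℕ} (M : Matrix (Fin (m + 2)) (Fin (m + 2)) R) (i : Fin (m + 1)) :
    f (ccM M i) = ccM (M.map f) i := by
  have h : (M.map f).charpoly = M.charpoly.map f := charpoly_map M f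
  rw [ccM, ccM, h]
  split_ifs
  · rw [← eval_map_apply]; simp
  · rw [← coeff_map, map_divByMonic f (monic_X_sub_C 1)]
    simp

/-- quotient polynomial with given coordinates -/
noncomputable def qc {m : ℕ} (c : Fin (m + 1) → R) : R[X] :=
  X ^ (m + 1) + ∑ i : Fin (m + 1), C (if i = 0 then c 0 + (-1) ^ (m + 1) else c i) * X ^ i.val

/-- polynomial with given coordinates -/
noncomputable def pc {m : ℕ} (c : Fin (m + 1) → R) : R[X] :=
  C (c 0) + (X - C 1) * qc c

lemma qc_coeff {m : ℕ} (c : Fin (m + 1) → R) (i : Fin (m + 1)) :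
    (qc c).coeff i.val = if i = 0 then c 0 + (-1) ^ (m + 1) else c i := by
  have h1 : i.val ≠ m + 1 := i.isLt.ne
  rw [qc, coeff_add, coeff_X_pow, if_neg h1, zero_add, finsetSum_coeff, Finset.sum_eq_single i]
  · simp
  · intro b _ hb
    have : i.val ≠ b.val := fun h => hb (Fin.ext h.symm)
    rw [coeff_C_mul_X_pow, if_neg this]
  · simp

lemma qc_aux {m : ℕ} (c : Fin (m + 1) → R) : (∑ i : Fin (m + 1),
    C (if i = 0 then c 0 + (-1) ^ (m + 1) else c i) * X ^ i.val : R[X]).degree < ((m + 1 : ℕ) : WithBot ℕ) := by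
  refine (degree_sum_le _ _).trans_lt ?_
  rw [Finset.sup_lt_iff (WithBot.bot_lt_coe _)]
  intro b _
  refine (degree_C_mul_X_pow_le _ _).trans_lt ?_
  exact_mod_cast b.isLt

lemma qc_monic {m : ℕ} (c : Fin (m + 1) → R) : (qc c).Monic :=
  monic_X_pow_add (qc_aux c)

lemma qc_natDegree [Nontrivial R] {m : ℕ} (c : Fin (m + 1) → R) : (qc c).natDegree = m + 1 := by
  rw [qc, natDegree_add_eq_left_of_degree_lt, natDegree_X_pow]
  rw [degree_X_pow]
  exact qc_aux c

lemma pc_monic [Nontrivial R] {m : ℕ} (c : Fin (m + 1) → R) : (pc c).Monic := by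
  have h1 := (monic_X_sub_C (1 : R)).mul (qc_monic c)
  rw [pc, add_comm]
  refine h1.add_of_left ?_
  rw [degree_eq_natDegree h1.ne_zero, (monic_X_sub_C (1 : R)).natDegree_mul (qc_monic c), qc_natDegree,
    natDegree_X_sub_C]
  exact degree_C_le.trans_lt (by exact_mod_cast (by omega))

lemma pc_natDegree [Nontrivial R] {m : ℕ} (c : Fin (m + 1) → R) : (pc c).natDegree = m + 2 := by
  rw [pc, natDegree_C_add, (monic_X_sub_C (1 : R)).natDegree_mul (qc_monic c), qc_natDegree,
    natDegree_X_sub_C]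
  omega

lemma pc_coeff_zero {m : ℕ} (c : Fin (m + 1) → R) : (pc c).coeff 0 = (-1) ^ m := by
  have := qc_coeff c 0
  simp only [Fin.val_zero, if_true] at this
  rw [pc, coeff_add, mul_coeff_zero, this]
  simp
  ring

lemma pc_map (f : R →+* S) {m : ℕ} (c : Fin (m + 1) → R) : (pc c).map f = pc (f ∘ c) := by
  simp only [pc, qc, Polynomial.map_add, Polynomial.map_mul, Polynomial.map_sub, map_C, map_X, map_one,
    Polynomial.map_pow, Polynomial.map_sum, Function.comp]
  have : ∀ i : Fin (m + 1), f (if i = 0 then c 0 + (-1) ^ (m + 1) else c i) =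
      if i = 0 then f (c 0) + (-1) ^ (m + 1) else f (c i) := by
    intro i
    split_ifs <;> simp
  simp only [this, Polynomial.map_one]

lemma ccM_of_charpoly [Nontrivial R] {m : ℕ} (c : Fin (m + 1) → R)
    (M : Matrix (Fin (m + 2)) (Fin (m + 2)) R)
    (h : M.charpoly = pc c) : ccM M = c := by
  ext i
  rw [ccM, h]
  split_ifs with hi
  · subst hi; simp [pc]
  · have h1 := (div_modByMonic_unique (f := pc c) (g := X - C 1) (qc c) (C (c 0)) (monic_X_sub_C 1)
      ⟨by rw [pc], by rw [degree_X_sub_C]; exact degree_C_lt⟩).1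
    rw [h1, qc_coeff, if_neg hi]

lemma charpoly_eq_pc [Nontrivial R] {m : ℕ} (M : Matrix (Fin (m + 2)) (Fin (m + 2)) R)
    (hM : M.det = 1) : M.charpoly = pc (ccM M) := by
  set q := M.charpoly /ₘ (X - C 1) with hq
  have h1 : C (M.charpoly.eval 1) + (X - C 1) * q = M.charpoly := by
    rw [← modByMonic_X_sub_C_eq_C_eval]
    exact modByMonic_add_div _ _
  have hcd : M.charpoly.natDegree = m + 2 := by
    rw [charpoly_natDegree_eq_dim, Fintype.card_fin]
  have hqd : q.natDegree = m + 1 := by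
    rw [hq, natDegree_divByMonic _ (monic_X_sub_C 1), natDegree_X_sub_C, hcd]; omega
  have hqm : q.Monic := by
    rw [Monic, hq, leadingCoeff_divByMonic_of_monic (monic_X_sub_C 1), M.charpoly_monic.leadingCoeff]
    rw [degree_X_sub_C, degree_eq_natDegree M.charpoly_monic.ne_zero, hcd]
    exact_mod_cast (by omega : 1 ≤ m + 2)
  have h0 : M.charpoly.coeff 0 = (-1) ^ m := by
    have := det_eq_sign_charpoly_coeff M
    rw [hM, Fintype.card_fin] at this
    have h2 : ((-1 : R) ^ m) * ((-1) ^ (m + 2)) = 1 := by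
      rw [← pow_add]; exact Even.neg_one_pow ⟨m + 1, by ring⟩
    calc _ = ((-1 : R) ^ m) * ((-1) ^ (m + 2)) * M.charpoly.coeff 0 := by rw [h2, one_mul]
      _ = _ := by rw [mul_assoc, ← this, mul_one]
  have hq0 : q.coeff 0 = M.charpoly.eval 1 + (-1) ^ (m + 1) := by
    have := congrArg (fun f => coeff f 0) h1
    simp only [coeff_add, mul_coeff_zero, coeff_C_zero, coeff_sub, coeff_X_zero, h0] at this
    rw [pow_succ]
    linear_combination (-1 : R) * this
  have hqq : q = qc (ccM M) := by
    rw [hqm.as_sum, qc, hqd, Finset.sum_range]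
    congr 1
    refine Finset.sum_congr rfl fun i _ => ?_
    by_cases hi : i = 0
    · subst hi
      simp only [if_true, Fin.val_zero, hq0, ccM]
    · simp only [if_neg hi, ccM, hq]
  rw [pc, ← hqq]
  simp only [ccM, if_true]
  exact h1.symm

lemma det_compP [Nontrivial R] (m : ℕ) (p : R[X]) (hp : p.Monic) (hd : p.natDegree = m + 1)
    (h0 : p.coeff 0 = (-1) ^ (m + 1)) : (compP (m + 1) p).det = 1 := by
  rw [det_eq_sign_charpoly_coeff, charpoly_compP m p hp hd, h0, Fintype.card_fin, ← pow_add]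
  exact Even.neg_one_pow ⟨m + 1, by ring⟩

/-- Block embedding -/
def emb (R : Type*) [CommRing R] (n : ℕ) : Matrix (Fin n) (Fin n) R →* Matrix (Fin (n + 1)) (Fin (n + 1)) R where
  toFun h := (fromBlocks h 0 0 (1 : Matrix (Fin 1) (Fin 1) R)).submatrix
    finSumFinEquiv.symm finSumFinEquiv.symm
  map_one' := by rw [fromBlocks_one, submatrix_one_equiv]
  map_mul' a b := by
    rw [submatrix_mul_equiv, fromBlocks_multiply]; simp

lemma emb_map (f : R →+* S) {n : ℕ} (h : Matrix (Fin n) (Fin n) R) :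
    (emb R n h).map f = emb S n (h.map f) := by
  simp only [emb, MonoidHom.coe_mk, OneHom.coe_mk]
  rw [← submatrix_map, fromBlocks_map]
  congr 2 <;> simp

lemma emb_charpoly {n : ℕ} (h : Matrix (Fin n) (Fin n) R) :
    (emb R n h).charpoly = h.charpoly * (X - C 1) := by
  have : emb R n h = (fromBlocks h 0 0 (1 : Matrix (Fin 1) (Fin 1) R)).reindex finSumFinEquiv finSumFinEquiv := rfl
  rw [this, charpoly_reindex, charpoly_fromBlocks_zero₁₂]
  simp [charpoly_one]

lemma emb_diagonal {n : ℕ} (d : Fin n → R) :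
    emb R n (diagonal d) = diagonal (Fin.snoc d 1 : Fin (n + 1) → R) := by
  ext i j
  refine Fin.lastCases ?_ (fun i => ?_) i <;> refine Fin.lastCases ?_ (fun j => ?_) j <;>
    simp [emb, finSumFinEquiv_symm_last, diagonal_apply, Fin.ext_iff]
  · intro h; have := j.isLt; omega
  · intro h; have := i.isLt; omega

end Companion
end BorelSL

namespace BorelSL

open Matrix Polynomial

section Step

universe u
variable {k : Type u} [Field k]

lemma pe_cc {m : ℕ} (F : MvPolynomial (Fin (m + 1)) k) (M : Matrix (Fin (m + 2)) (Fin (m + 2)) k) :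
    pe (MvPolynomial.aeval (ccM (gm k (Fin (m + 2)))) F) M = MvPolynomial.aeval (ccM M) F := by
  rw [evM_apply, ← AlgHom.comp_apply, MvPolynomial.comp_aeval]
  congr 2
  ext i
  change (evM M : _ →ₐ[k] k).toRingHom (ccM (gm k (Fin (m + 2))) i) = _
  rw [ccM_map]
  congr 1
  exact gm_map M

lemma pe_cc_emb {m : ℕ} (F : MvPolynomial (Fin (m + 1)) k)
    (M : Matrix (Fin (m + 1)) (Fin (m + 1)) k) :
    pe (MvPolynomial.aeval (ccM (emb _ _ (gm k (Fin (m + 1))))) F) M =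
      MvPolynomial.aeval (ccM (emb k (m + 1) M)) F := by
  rw [evM_apply, ← AlgHom.comp_apply, MvPolynomial.comp_aeval]
  congr 2
  ext i
  change (evM M : _ →ₐ[k] k).toRingHom (ccM (emb _ _ (gm k (Fin (m + 1)))) i) = _
  rw [ccM_map, emb_map]
  congr 2
  exact gm_map M

lemma pe_kry {N : ℕ} (v : Fin N → k) (M : Matrix (Fin N) (Fin N) k) :
    pe (kry (gm k (Fin N)) (fun i => MvPolynomial.C (v i))).det M = (kry M v).det := by
  change (evM M : _ →ₐ[k] k).toRingHom _ = _
  rw [RingHom.map_det]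
  congr 1
  change (kry (gm k (Fin N)) (fun i => MvPolynomial.C (v i))).map (evM M : _ →ₐ[k] k).toRingHom = _
  rw [kry_map]
  congr 1
  · exact gm_map M
  · ext i
    exact (evM M : _ →ₐ[k] k).commutes (v i)

lemma pe_kry_emb {N : ℕ} (v : Fin (N + 1) → k) (M : Matrix (Fin N) (Fin N) k) :
    pe (kry (emb _ _ (gm k (Fin N))) (fun i => MvPolynomial.C (v i))).det M =
      (kry (emb k N M) v).det := by
  change (evM M : _ →ₐ[k] k).toRingHom _ = _
  rw [RingHom.map_det]
  congr 1
  change (kry (emb _ _ (gm k (Fin N))) (fun i => MvPolynomial.C (v i))).map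
    (evM M : _ →ₐ[k] k).toRingHom = _
  rw [kry_map, emb_map]
  congr 2
  · exact gm_map M
  · ext i
    exact (evM M : _ →ₐ[k] k).commutes (v i)

/-- polynomial in the coordinates of the characteristic polynomial -/
noncomputable def FQ {m : ℕ} (P : MvPolynomial (Fin (m + 2) × Fin (m + 2)) k)
    (Q Q' : Matrix (Fin (m + 2)) (Fin (m + 2)) k) : MvPolynomial (Fin (m + 1)) k :=
  pe P (Q.map (algebraMap k _) * compP (m + 2) (pc (MvPolynomial.X (R := k))) *
    Q'.map (algebraMap k _))

lemma aeval_FQ {m : ℕ} (P : MvPolynomial (Fin (m + 2) × Fin (m + 2)) k)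
    (Q Q' : Matrix (Fin (m + 2)) (Fin (m + 2)) k) (c : Fin (m + 1) → k) :
    MvPolynomial.aeval c (FQ P Q Q') = pe P (Q * compP (m + 2) (pc c) * Q') := by
  rw [FQ, pe_map]
  congr 1
  have h1 : ∀ T : Matrix (Fin (m + 2)) (Fin (m + 2)) k,
      (T.map (algebraMap k (MvPolynomial (Fin (m + 1)) k))).map
        (MvPolynomial.aeval c : MvPolynomial (Fin (m + 1)) k →ₐ[k] k) = T := by
    intro T
    ext i j
    simp
  have h2 : (compP (m + 2) (pc (MvPolynomial.X (R := k)))).map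
        (MvPolynomial.aeval c : MvPolynomial (Fin (m + 1)) k →ₐ[k] k) = compP (m + 2) (pc c) := by
    change (compP (m + 2) (pc (MvPolynomial.X (R := k)))).map
        (MvPolynomial.aeval c : MvPolynomial (Fin (m + 1)) k →ₐ[k] k).toRingHom = _
    rw [← compP_map, pc_map]
    congr 2
    ext i
    simp
  rw [Matrix.map_mul, Matrix.map_mul, h1, h1, h2]

/-- density of the word image in `SL_n` -/
def Dens {σ : Type} (k : Type u) [Field k] (w : FreeGroup σ) (n : ℕ) : Prop :=
  ∀ P : MvPolynomial (Fin n × Fin n) k,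
    (∀ g : σ → GL (Fin n) k, pe P (FreeGroup.lift g w).val = 0) →
    ∀ M : Matrix (Fin n) (Fin n) k, M.det = 1 → pe P M = 0

variable {σ : Type}

lemma emb_lift (n : ℕ) (w : FreeGroup σ) (g : σ → GL (Fin n) k) :
    emb k n (FreeGroup.lift g w).val =
      (FreeGroup.lift (fun s => (Units.map (emb k n) (g s) : GL (Fin (n + 1)) k)) w).val := by
  have : (Units.map (emb k n)).comp (FreeGroup.lift g) =
      FreeGroup.lift (fun s => (Units.map (emb k n) (g s) : GL (Fin (n + 1)) k)) := by
    ext1 s; simp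
  rw [← this]
  rfl

lemma conj_lift (n : ℕ) (w : FreeGroup σ) (g : σ → GL (Fin n) k) (Q : GL (Fin n) k) :
    Q * FreeGroup.lift g w * Q⁻¹ = FreeGroup.lift (fun s => Q * g s * Q⁻¹) w := by
  have : (MulAut.conj Q).toMonoidHom.comp (FreeGroup.lift g) =
      FreeGroup.lift (fun s => Q * g s * Q⁻¹) := by
    ext1 s; simp
  rw [← this]
  rfl

variable [Infinite k] [Fintype σ]

lemma dominance {m : ℕ} (w : FreeGroup σ)
    (H2 : ∃ g : σ → GL (Fin (m + 2)) k, ((FreeGroup.lift g w).val - 1).det ≠ 0)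
    (hD : Dens k w (m + 1)) (F : MvPolynomial (Fin (m + 1)) k)
    (hF : ∀ g : σ → GL (Fin (m + 2)) k, MvPolynomial.aeval (ccM (FreeGroup.lift g w).val) F = 0) :
    F = 0 := by
  by_contra hF0
  have hX : ¬ IsUnit (MvPolynomial.X 0 : MvPolynomial (Fin (m + 1)) k) :=
    fun h => by
      have := h.map (MvPolynomial.aeval (fun _ => (0 : k)) : MvPolynomial (Fin (m + 1)) k →ₐ[k] k)
      simp at this
  obtain ⟨F', hF', hnd⟩ :=
    (FiniteMultiplicity.of_not_isUnit hX hF0).exists_eq_pow_mul_and_not_dvd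
  set r := multiplicity (MvPolynomial.X 0 : MvPolynomial (Fin (m + 1)) k) F
  have key := irred_word (k := k) w
    (MvPolynomial.aeval (ccM (gm k (Fin (m + 2)))) (MvPolynomial.X 0 ^ r : MvPolynomial (Fin (m + 1)) k))
    (MvPolynomial.aeval (ccM (gm k (Fin (m + 2)))) F') (by
      intro g
      rw [pe_cc, pe_cc, ← map_mul, ← hF', hF])
  rcases key with h | h
  · obtain ⟨g, hg⟩ := H2
    have h1 := h g
    rw [pe_cc, map_pow, MvPolynomial.aeval_X] at h1
    have h2 := eq_zero_of_pow_eq_zero h1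
    rw [ccM, if_pos rfl, eval_charpoly] at h2
    apply hg
    rw [← neg_sub, det_neg, ← map_one (scalar (Fin (m + 2))), h2, mul_zero]
  · apply hnd
    apply X_zero_dvd
    intro c hc
    have h1 := hD (MvPolynomial.aeval (ccM (emb _ _ (gm k (Fin (m + 1))))) F') (by
      intro g
      rw [pe_cc_emb, emb_lift, ← pe_cc, h]) (compP (m + 1) (qc c))
      (det_compP m _ (qc_monic c) (qc_natDegree c) (by
        have := qc_coeff c 0
        simpa [hc] using this))
    rw [pe_cc_emb, ccM_of_charpoly c] at h1
    · exact h1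
    · rw [emb_charpoly, charpoly_compP m _ (qc_monic c) (qc_natDegree c), pc, hc]
      simp [mul_comm]

lemma exists_diag [CharZero k] (m : ℕ) : ∃ d : Fin (m + 2) → k, ∏ i, d i = 1 ∧
    Function.Injective (Fin.snoc d 1 : Fin (m + 3) → k) := by
  let e : Fin (m + 2) → ℤ := Fin.snoc (fun i : Fin (m + 1) => (i.val : ℤ) + 1) (- ∑ i : Fin (m + 1), ((i.val : ℤ) + 1))
  have he : ∑ i, e i = 0 := by
    rw [Fin.sum_univ_castSucc]; simp [e]
  have hpos : (0 : ℤ) < ∑ i : Fin (m + 1), ((i.val : ℤ) + 1) :=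
    Finset.sum_pos (fun i _ => by positivity) Finset.univ_nonempty
  let E : Fin (m + 3) → ℤ := Fin.snoc e 0
  have hE : Function.Injective E := by
    rw [Fin.snoc_injective_iff, Fin.snoc_injective_iff]
    refine ⟨⟨?_, ?_⟩, ?_⟩
    · intro a b h
      ext
      simpa using h
    · rintro ⟨i, hi⟩
      simp only at hi
      have := i.val
      linarith [Int.natCast_nonneg i.val]
    · rintro ⟨i, hi⟩
      revert hi
      refine Fin.lastCases ?_ (fun i => ?_) i
      · simp only [e, Fin.snoc_last]; intro h; linarith
      · simp only [e, Fin.snoc_castSucc]; intro h; linarith [Int.natCast_nonneg i.val]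
  have h2 : Function.Injective (fun z : ℤ => (2 : k) ^ z) := by
    intro a b h
    have h' : ((2 : ℚ) ^ a : ℚ) = (2 : ℚ) ^ b := by
      have : (((2 : ℚ) ^ a : ℚ) : k) = (((2 : ℚ) ^ b : ℚ) : k) := by push_cast; exact h
      exact_mod_cast this
    exact zpow_right_injective₀ (by norm_num) (by norm_num) h'
  refine ⟨fun i => 2 ^ e i, ?_, ?_⟩
  · have : ∀ s : Finset (Fin (m + 2)), ∏ i ∈ s, (2 : k) ^ e i = 2 ^ ∑ i ∈ s, e i := by
      intro s
      classical
      induction s using Finset.induction_on with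
      | empty => simp
      | insert a s ha ih =>
        rw [Finset.prod_insert ha, Finset.sum_insert ha, ih, zpow_add₀ two_ne_zero]
    rw [this, he, zpow_zero]
  · have : (Fin.snoc (fun i => (2 : k) ^ e i) 1 : Fin (m + 3) → k) = (fun z : ℤ => (2 : k) ^ z) ∘ E := by
      ext i
      refine Fin.lastCases ?_ (fun i => ?_) i <;> simp [E]
    rw [this]
    exact h2.comp hE

lemma kry_diag {N : ℕ} (d : Fin N → k) (hd : Function.Injective d) :
    (kry (diagonal d) (fun _ => 1)).det ≠ 0 := by
  have : kry (diagonal d) (fun _ => 1) = vandermonde d := by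
    ext i j
    simp [kry, diagonal_pow, mulVec_diagonal, vandermonde]
  rw [this]
  exact det_vandermonde_ne_zero_iff.2 hd

lemma exists_cyclic [CharZero k] {m : ℕ} (w : FreeGroup σ)
    (H1 : ∀ g : σ → GL (Fin (m + 2)) k, (FreeGroup.lift g w).val.det = 1)
    (H2 : ∃ g : σ → GL (Fin (m + 2)) k, ((FreeGroup.lift g w).val - 1).det ≠ 0)
    (hD : Dens k w (m + 1)) :
    ∃ (v : Fin (m + 2) → k) (g : σ → GL (Fin (m + 2)) k), (kry (FreeGroup.lift g w).val v).det ≠ 0 := by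
  by_contra! hcon
  rcases m with _ | m
  · have h1 := dominance w H2 hD
      (MvPolynomial.X 0 * (MvPolynomial.X 0 - MvPolynomial.C 4)) (by
      intro g
      set M := (FreeGroup.lift g w).val with hM
      have hdet : M.det = 1 := H1 g
      have hv : ∀ v, (kry M v).det = 0 := fun v => hcon v g
      have e1 := hv ![1, 0]
      have e2 := hv ![0, 1]
      have e3 := hv ![1, 1]
      simp [kry, det_fin_two, mulVec, dotProduct, Fin.sum_univ_two] at e1 e2 e3
      rw [det_fin_two] at hdet
      have hc : ccM M 0 = (1 - M 0 0) * (1 - M 1 1) - M 0 1 * M 1 0 := by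
        rw [ccM, if_pos rfl, eval_charpoly, det_fin_two]
        simp
      simp only [map_mul, map_sub, MvPolynomial.aeval_X, hc]
      simp [e1, e2] at e3 hdet ⊢
      have e4 : M 1 1 = M 0 0 := sub_eq_zero.1 e3
      rw [e4] at hdet ⊢
      rcases mul_self_eq_one_iff.1 hdet with h | h
      · left; left; rw [h, sub_self]
      · right; rw [h]; norm_num)
    have h2 := congrArg (MvPolynomial.aeval (fun _ => (5 : k))) h1
    simp only [map_mul, map_sub, MvPolynomial.aeval_X, map_zero, MvPolynomial.aeval_C] at h2
    norm_num at h2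
  · have h1 := hD (kry (emb _ _ (gm k (Fin (m + 2)))) (fun i => MvPolynomial.C 1)).det (by
      intro g
      rw [pe_kry_emb (fun _ => 1), emb_lift, hcon])
    obtain ⟨d, hd, hinj⟩ := exists_diag (k := k) m
    have h2 := h1 (diagonal d) (by rw [det_diagonal, hd])
    rw [pe_kry_emb (fun _ => 1), emb_diagonal] at h2
    exact kry_diag _ hinj h2

lemma dens_step [CharZero k] {m : ℕ} (w : FreeGroup σ)
    (H1 : ∀ g : σ → GL (Fin (m + 2)) k, (FreeGroup.lift g w).val.det = 1)
    (H2 : ∃ g : σ → GL (Fin (m + 2)) k, ((FreeGroup.lift g w).val - 1).det ≠ 0)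
    (hD : Dens k w (m + 1)) : Dens k w (m + 2) := by
  intro P hP
  obtain ⟨v, g0, hg0⟩ := exists_cyclic w H1 H2 hD
  have conj : ∀ M : Matrix (Fin (m + 2)) (Fin (m + 2)) k, M.det = 1 → (kry M v).det ≠ 0 →
      M = kry M v * compP (m + 2) (pc (ccM M)) * (kry M v)⁻¹ := by
    intro M hM hk
    rw [← charpoly_eq_pc M hM, ← mul_kry, mul_assoc, mul_nonsing_inv _ (IsUnit.mk0 _ hk), mul_one]
  have hFQ : ∀ Q : GL (Fin (m + 2)) k, FQ P Q.val Q⁻¹.val = 0 := by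
    intro Q
    apply dominance w H2 hD
    have key := irred_word (k := k) w
      (kry (gm k (Fin (m + 2))) (fun i => MvPolynomial.C (v i))).det
      (MvPolynomial.aeval (ccM (gm k (Fin (m + 2)))) (FQ P Q.val Q⁻¹.val)) (by
        intro g
        rw [pe_kry, pe_cc, aeval_FQ]
        set M := (FreeGroup.lift g w).val with hM
        by_cases hk : (kry M v).det = 0
        · rw [hk, zero_mul]
        · have h1 := conj M (H1 g) hk
          let K : GL (Fin (m + 2)) k := Matrix.GeneralLinearGroup.mkOfDetNeZero (kry M v) hk
          have hK : K.val = kry M v := rfl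
          have hK' : K⁻¹.val = (kry M v)⁻¹ := by rw [coe_units_inv, hK]
          have h2 : Q.val * compP (m + 2) (pc (ccM M)) * Q⁻¹.val =
              ((Q * K⁻¹) * FreeGroup.lift g w * (Q * K⁻¹)⁻¹).val := by
            have h3 : compP (m + 2) (pc (ccM M)) = K⁻¹.val * M * K.val := by
              have : M = K.val * compP (m + 2) (pc (ccM M)) * K⁻¹.val := by rw [hK, hK']; exact h1
              conv_rhs => rw [this]
              simp [mul_assoc]
            rw [h3]
            simp only [Units.val_mul, _root_.mul_inv_rev, inv_inv, mul_assoc, hM]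
          rw [h2, conj_lift, hP, mul_zero])
    rcases key with h | h
    · have := h g0
      rw [pe_kry] at this
      exact absurd this hg0
    · intro g
      rw [← pe_cc, h]
  have key := irred_SL (k := k) (kry (gm k (Fin (m + 2))) (fun i => MvPolynomial.C (v i))).det P (by
    intro M hM
    rw [pe_kry]
    by_cases hk : (kry M v).det = 0
    · rw [hk, zero_mul]
    · let K : GL (Fin (m + 2)) k := Matrix.GeneralLinearGroup.mkOfDetNeZero (kry M v) hk
      have hK : K.val = kry M v := rfl
      have hK' : K⁻¹.val = (kry M v)⁻¹ := by rw [coe_units_inv, hK]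
      have h1 := aeval_FQ P K.val K⁻¹.val (ccM M)
      rw [hFQ, map_zero, hK, hK', ← conj M hM hk] at h1
      rw [← h1, mul_zero])
  rcases key with h | h
  · have := h _ (H1 g0)
    rw [pe_kry] at this
    exact absurd this hg0
  · exact h

end Step

lemma dens_all {k : Type*} [Field k] [CharZero k] [IsAlgClosed k] {d : ℕ} (w : FreeGroup (Fin d)) (hw : w ≠ 1)
    (n : ℕ) : Dens k (commW w) (n + 1) := by
  have : Infinite k := IsAlgClosed.instInfinite
  induction n with
  | zero =>
    intro P hP M hM
    have : M = 1 := by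
      ext i j
      rw [det_fin_one] at hM
      fin_cases i; fin_cases j
      simpa using hM
    have h := hP 1
    have h1 : FreeGroup.lift (1 : Fin d × Bool → GL (Fin 1) k) (commW w) = 1 := by
      have : FreeGroup.lift (1 : Fin d × Bool → GL (Fin 1) k) = 1 := by ext1 s; simp
      rw [this]; rfl
    rw [h1] at h
    rw [this]
    exact h
  | succ m ih =>
    apply dens_step _ _ _ ih
    · intro g
      have : (Matrix.GeneralLinearGroup.det (FreeGroup.lift g (commW w))) = 1 := by
        rw [lift_commW]
        have h : (Matrix.GeneralLinearGroup.det).comp (FreeGroup.lift (fun i => g (i, true) * g (i, false) * (g (i, true))⁻¹ * (g (i, false))⁻¹)) = 1 := by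
          ext1 i
          simp [mul_comm]
        exact DFunLike.congr_fun h w
      exact congrArg Units.val this
    · obtain ⟨z, hz⟩ := HasEnoughRootsOfUnity.exists_primitiveRoot k (m + 2)
      obtain ⟨A, hA⟩ := exists_nontriv (k := k) (n := m) w hw
      exact exists_det_sub_one_ne_zero hz (commW w) A hA

end BorelSL


/-- Borel's theorem for `SL_n` in characteristic zero: for an
algebraically closed field `k` of characteristic zero, `n ≥ 1`, `d ≥ 2` and a
nontrivial word `w ∈ F_d`, the image of the word map `w : SL_n(k)^d → SL_n(k)` is
Zariski dense: any polynomial in the `n²` matrix entries vanishing on all word values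
vanishes on all of `SL_n(k)`. -/
theorem borel_dominance_SL
    {k : Type*} [Field k] [IsAlgClosed k] [CharZero k]
    (n : ℕ) (hn : 1 ≤ n) (d : ℕ) (hd : 2 ≤ d)
    (w : FreeGroup (Fin d)) (hw : w ≠ 1)
    (p : MvPolynomial (Fin n × Fin n) k)
    (hp : ∀ g : Fin d → Matrix.SpecialLinearGroup (Fin n) k,
      MvPolynomial.eval
        (fun ij : Fin n × Fin n =>
          ((FreeGroup.lift g w : Matrix.SpecialLinearGroup (Fin n) k) :
            Matrix (Fin n) (Fin n) k) ij.1 ij.2) p = 0) :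
    ∀ A : Matrix.SpecialLinearGroup (Fin n) k,
      MvPolynomial.eval
        (fun ij : Fin n × Fin n => (A : Matrix (Fin n) (Fin n) k) ij.1 ij.2) p = 0 := by
  obtain ⟨n, rfl⟩ : ∃ m, n = m + 1 := ⟨n - 1, by omega⟩
  intro A
  refine BorelSL.dens_all (k := k) w hw n p ?_ A.val A.prop
  intro g
  rw [BorelSL.lift_commW]
  let h : Fin d → Matrix.SpecialLinearGroup (Fin (n + 1)) k := fun i =>
    ⟨(g (i, true) * g (i, false) * (g (i, true))⁻¹ * (g (i, false))⁻¹).val, by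
      have : Matrix.GeneralLinearGroup.det
        (g (i, true) * g (i, false) * (g (i, true))⁻¹ * (g (i, false))⁻¹) = 1 := by
        simp [mul_comm]
      exact congrArg Units.val this⟩
  have h1 : (Matrix.SpecialLinearGroup.toGL).comp (FreeGroup.lift h) =
      FreeGroup.lift (fun i => g (i, true) * g (i, false) * (g (i, true))⁻¹ * (g (i, false))⁻¹) := by
    ext1 i
    apply Units.ext
    simp only [MonoidHom.comp_apply, FreeGroup.lift_apply_of]
    rfl
  rw [← h1]
  exact hp h
end

section
/- Let K be an algebraically closed field of characteristic zero, and let P be a multilinear noncommutative polynomial in n variables over K, given by coefficients c : Sym(n) → K via P(A_1,…,A_n) = Σ_{σ ∈ Sym(n)} c_σ · A_{σ(1)} A_{σ(2)} ⋯ A_{σ(n)}, evaluated on 2×2 matrices over K. Suppose there exists a tuple (A_1,…,A_n) of 2×2 matrices over K such that the value P(A_1,…,A_n) is not a scalar matrix and has nonzero trace. Then P has a unipotent value: there exists a tuple (B_1,…,B_n) of 2×2 matrices over K such that (P(B_1,…,B_n) − I)² = 0 and P(B_1,…,B_n) ≠ I, where I is the 2×2 identity matrix. -/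
/-- The evaluation of the multilinear noncommutative polynomial with coefficients
`c : Sym(n) → K` at a tuple of `2×2` matrices `A`:
`P(A_1,…,A_n) = Σ_{σ} c_σ • A_{σ(1)} ⋯ A_{σ(n)}`. -/
noncomputable def multilinearEval {K : Type*} [Field K] {n : ℕ}
    (c : Equiv.Perm (Fin n) → K) (A : Fin n → Matrix (Fin 2) (Fin 2) K) :
    Matrix (Fin 2) (Fin 2) K :=
  ∑ σ : Equiv.Perm (Fin n), c σ • ((List.finRange n).map (fun i => A (σ i))).prod

namespace UniVal

/-- Discriminant of the characteristic polynomial of a `2×2` matrix. -/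
def disc {K : Type*} [Field K] (M : Matrix (Fin 2) (Fin 2) K) : K :=
  (M 0 0 - M 1 1) ^ 2 + 4 * (M 0 1 * M 1 0)

/-- Polar form of `disc`. -/
def bil {K : Type*} [Field K] (M N : Matrix (Fin 2) (Fin 2) K) : K :=
  (M 0 0 - M 1 1) * (N 0 0 - N 1 1) + 2 * (M 0 1 * N 1 0 + M 1 0 * N 0 1)

/-- The matrix is scalar. -/
def IsSc {K : Type*} [Field K] (M : Matrix (Fin 2) (Fin 2) K) : Prop :=
  M 0 1 = 0 ∧ M 1 0 = 0 ∧ M 0 0 = M 1 1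

section slot
variable {K : Type*} [Field K]

lemma bil_add_left (M N R : Matrix (Fin 2) (Fin 2) K) :
    bil (M + N) R = bil M R + bil N R := by simp [bil]; ring

lemma bil_smul_left (a : K) (M R : Matrix (Fin 2) (Fin 2) K) :
    bil (a • M) R = a * bil M R := by simp [bil]; ring

lemma bil_self (M : Matrix (Fin 2) (Fin 2) K) : bil M M = disc M := by simp [bil, disc]; ring

lemma bil_comm (M N : Matrix (Fin 2) (Fin 2) K) : bil M N = bil N M := by simp [bil]; ring

lemma disc_add (M N : Matrix (Fin 2) (Fin 2) K) :
    disc (M + N) = disc M + 2 * bil M N + disc N := by simp [bil, disc]; ring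

lemma disc_smul (a : K) (M : Matrix (Fin 2) (Fin 2) K) :
    disc (a • M) = a ^ 2 * disc M := by simp [disc]; ring

lemma IsSc.bil_eq {M : Matrix (Fin 2) (Fin 2) K} (h : IsSc M) (N) : bil M N = 0 := by
  obtain ⟨h1, h2, h3⟩ := h
  simp [bil, h1, h2, h3]

/-- A space of matrices in which every matrix of zero discriminant is scalar or traceless, and
which has an element of nonzero trace, carries a discriminant form of rank at most one. -/
lemma slot_lemma [IsAlgClosed K] [CharZero K] (W : Submodule K (Matrix (Fin 2) (Fin 2) K))
    (hW : ∀ M ∈ W, disc M = 0 → IsSc M ∨ M.trace = 0)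
    {S U V : Matrix (Fin 2) (Fin 2) K} (hS : S ∈ W) (hU : U ∈ W) (hV : V ∈ W)
    (htr : S.trace ≠ 0) : bil U V ^ 2 = disc U * disc V := by
  by_contra hne
  -- an isotropic vector not in the radical
  have key : ∃ Z ∈ W, disc Z = 0 ∧ ∃ Y ∈ W, bil Y Z ≠ 0 := by
    by_cases hV0 : disc V = 0
    · refine ⟨V, hV, hV0, U, hU, ?_⟩
      intro h0
      apply hne
      rw [h0, hV0]; ring
    · obtain ⟨δ, hδ⟩ := IsAlgClosed.exists_pow_nat_eq (bil U V ^ 2 - disc U * disc V)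
        (n := 2) (by norm_num)
      have hδ0 : δ ≠ 0 := by
        rintro rfl
        apply hne
        linear_combination -hδ
      refine ⟨disc V • U + (-bil U V + δ) • V, W.add_mem (W.smul_mem _ hU) (W.smul_mem _ hV),
        ?_, V, hV, ?_⟩
      · rw [disc_add, disc_smul, disc_smul, bil_smul_left, bil_comm, bil_smul_left, bil_comm V U]
        linear_combination (disc V) * hδ
      · rw [bil_comm, bil_add_left, bil_smul_left, bil_smul_left, bil_self]
        have : disc V * bil U V + (-bil U V + δ) * disc V = δ * disc V := by ring
        rw [this]
        exact mul_ne_zero hδ0 hV0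
  obtain ⟨Z, hZ, hZ0, Y, hY, hYZ⟩ := key
  have hZtr : Z.trace = 0 := by
    rcases hW Z hZ hZ0 with h | h
    · exact absurd (by rw [bil_comm]; exact h.bil_eq Y) hYZ
    · exact h
  have fin : ∀ C ∈ W, C.trace ≠ 0 → bil C Z = 0 := by
    intro C hC hCt
    by_contra hb
    have hmem : C + (-disc C / (2 * bil C Z)) • Z ∈ W := W.add_mem hC (W.smul_mem _ hZ)
    rcases hW _ hmem (by
      rw [disc_add, disc_smul, bil_comm, bil_smul_left, bil_comm Z C, hZ0]
      field_simp
      ring) with h | h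
    · have := h.bil_eq Z
      rw [bil_add_left, bil_smul_left, bil_self, hZ0] at this
      exact hb (by simpa using this)
    · rw [Matrix.trace_add, Matrix.trace_smul, hZtr] at h
      exact hCt (by simpa using h)
  have hS0 := fin S hS htr
  have h1 : (S + Y).trace = 0 := by
    by_contra hc
    have := fin _ (W.add_mem hS hY) hc
    rw [bil_add_left, hS0, zero_add] at this
    exact hYZ this
  have h2 : (S + (-1 : K) • Y).trace = 0 := by
    by_contra hc
    have := fin _ (W.add_mem hS (W.smul_mem (-1) hY)) hc
    rw [bil_add_left, hS0, zero_add, bil_smul_left] at this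
    exact hYZ (by simpa using this)
  rw [Matrix.trace_add] at h1 h2
  rw [Matrix.trace_smul, smul_eq_mul] at h2
  apply htr
  have : (2 : K) * S.trace = 0 := by linear_combination h1 + h2
  simpa using this

end slot

section multi
variable {K : Type*} [Field K] {n : ℕ}


open Function

lemma poly_line (f : MultilinearMap K (fun _ : Fin n => Matrix (Fin 2) (Fin 2) K)
      (Matrix (Fin 2) (Fin 2) K))
    (A d : Fin n → Matrix (Fin 2) (Fin 2) K) (i j : Fin 2) :
    ∃ p : Polynomial K, ∀ t : K, p.eval t = f (A + t • d) i j := by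
  classical
  refine ⟨∑ s : Finset (Fin n), Polynomial.C (f (s.piecewise d A) i j) * Polynomial.X ^ s.card, ?_⟩
  intro t
  rw [add_comm A, MultilinearMap.map_add_univ, Polynomial.eval_finsetSum, Matrix.sum_apply]
  refine Finset.sum_congr rfl fun s _ => ?_
  have h := f.map_piecewise_smul (fun _ => t) (s.piecewise d A) s
  have h2 : s.piecewise (fun i => t • s.piecewise d A i) (s.piecewise d A)
      = s.piecewise (t • d) A := by
    ext1 i
    by_cases hi : i ∈ s <;> simp [hi]
  rw [h2] at h
  rw [h, Polynomial.eval_mul, Polynomial.eval_C, Polynomial.eval_pow, Polynomial.eval_X,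
    Matrix.smul_apply, smul_eq_mul, Finset.prod_const, mul_comm]

/-- Key degeneracy statement: in every slot, the discriminant form has rank at most one. -/
lemma rank_one [IsAlgClosed K] [CharZero K]
    (f : MultilinearMap K (fun _ : Fin n => Matrix (Fin 2) (Fin 2) K)
      (Matrix (Fin 2) (Fin 2) K))
    (hN : ∀ A, disc (f A) = 0 → IsSc (f A) ∨ (f A).trace = 0)
    (C : Fin n → Matrix (Fin 2) (Fin 2) K) (hC : (f C).trace ≠ 0)
    (A : Fin n → Matrix (Fin 2) (Fin 2) K) (a : Fin n) (X Y : Matrix (Fin 2) (Fin 2) K) :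
    bil (f (update A a X)) (f (update A a Y)) ^ 2
      = disc (f (update A a X)) * disc (f (update A a Y)) := by
  have hup : ∀ (Z : Matrix (Fin 2) (Fin 2) K) (t : K),
      update A a Z + t • update (C - A) a 0 = update (A + t • (C - A)) a Z := by
    intro Z t
    ext1 i
    by_cases hi : i = a
    · subst hi; simp
    · simp [hi]
  choose p hp using poly_line f (update A a X) (update (C - A) a 0)
  choose q hq using poly_line f (update A a Y) (update (C - A) a 0)
  choose r hr using poly_line f (update A a (C a)) (update (C - A) a 0)
  let D : Polynomial K := ((p 0 0 - p 1 1) * (q 0 0 - q 1 1)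
      + 2 * (p 0 1 * q 1 0 + p 1 0 * q 0 1)) ^ 2
      - ((p 0 0 - p 1 1) ^ 2 + 4 * (p 0 1 * p 1 0)) * ((q 0 0 - q 1 1) ^ 2 + 4 * (q 0 1 * q 1 0))
  let T : Polynomial K := r 0 0 + r 1 1
  have hD : ∀ t, D.eval t = bil (f (update (A + t • (C - A)) a X))
      (f (update (A + t • (C - A)) a Y)) ^ 2
      - disc (f (update (A + t • (C - A)) a X)) * disc (f (update (A + t • (C - A)) a Y)) := by
    intro t
    simp only [← hup]
    simp [D, hp, hq, bil, disc]
  have hT : ∀ t, T.eval t = (f (update (A + t • (C - A)) a (C a))).trace := by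
    intro t
    simp only [← hup]
    simp [T, hr, Matrix.trace_fin_two]
  have hDT : D * T = 0 := by
    apply Polynomial.funext
    intro t
    rw [Polynomial.eval_mul, Polynomial.eval_zero]
    by_cases ht : T.eval t = 0
    · rw [ht, mul_zero]
    · rw [hT] at ht
      have hs : bil (f (update (A + t • (C - A)) a X)) (f (update (A + t • (C - A)) a Y)) ^ 2
          = disc (f (update (A + t • (C - A)) a X)) * disc (f (update (A + t • (C - A)) a Y)) := by
        refine slot_lemma (LinearMap.range (f.toLinearMap (A + t • (C - A)) a)) ?_
          ⟨C a, rfl⟩ ⟨X, rfl⟩ ⟨Y, rfl⟩ ht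
        rintro _ ⟨Z, rfl⟩ h0
        exact hN _ h0
      rw [hD, hs, sub_self, zero_mul]
  have hT0 : T ≠ 0 := by
    intro h0
    have := hT 1
    rw [h0, Polynomial.eval_zero] at this
    apply hC
    rw [this]
    congr 2
    ext1 i
    by_cases hi : i = a
    · subst hi; simp
    · simp [hi]
  have hD0 : D = 0 := by
    rcases mul_eq_zero.mp hDT with h | h
    · exact h
    · exact absurd h hT0
  have := hD 0
  rw [hD0, Polynomial.eval_zero] at this
  simp only [zero_smul, add_zero] at this
  exact (sub_eq_zero.mp this.symm)

/-- Diagonal or antidiagonal matrix. -/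
def mat (b : Bool) (x y : K) : Matrix (Fin 2) (Fin 2) K :=
  if b then !![0, x; y, 0] else !![x, 0; 0, y]

lemma mat_add (b : Bool) (x y x' y' : K) : mat b (x + x') (y + y') = mat b x y + mat b x' y' := by
  cases b <;> simp [mat]

/-- conjugation equivariance -/
def Equivar (f : MultilinearMap K (fun _ : Fin n => Matrix (Fin 2) (Fin 2) K)
      (Matrix (Fin 2) (Fin 2) K)) : Prop :=
  ∀ (g g' : Matrix (Fin 2) (Fin 2) K), g * g' = 1 → ∀ A, f (fun i => g * A i * g') = g * f A * g'

lemma Equivar.smul {f : MultilinearMap K (fun _ : Fin n => Matrix (Fin 2) (Fin 2) K)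
      (Matrix (Fin 2) (Fin 2) K)} (hf : Equivar f) {g g' : Matrix (Fin 2) (Fin 2) K}
    (hg : g * g' = 1) {A : Fin n → Matrix (Fin 2) (Fin 2) K} {l : Fin n → K}
    (h : ∀ i, g * A i * g' = l i • A i) : (∏ i, l i) • f A = g * f A * g' := by
  rw [← hf g g' hg, ← MultilinearMap.map_smul_univ]
  congr 1
  ext1 i
  exact (h i).symm

/-- parity of a pattern -/
def sgn (b : Bool) : K := if b then -1 else 1

lemma sign_conj {f : MultilinearMap K (fun _ : Fin n => Matrix (Fin 2) (Fin 2) K)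
      (Matrix (Fin 2) (Fin 2) K)} (hf : Equivar f) (b : Fin n → Bool) (x y : Fin n → K) :
    (∏ i, (sgn (b i) : K)) • f (fun i => mat (b i) (x i) (y i)) =
      !![1, 0; 0, -1] * f (fun i => mat (b i) (x i) (y i)) * !![1, 0; 0, -1] := by
  apply hf.smul
  · ext i j; fin_cases i <;> fin_cases j <;> simp
  · intro i
    cases b i <;> ext k j <;> fin_cases k <;> fin_cases j <;> simp [mat, sgn]

lemma odd_anti [CharZero K] {f : MultilinearMap K (fun _ : Fin n => Matrix (Fin 2) (Fin 2) K)
      (Matrix (Fin 2) (Fin 2) K)} (hf : Equivar f) (b : Fin n → Bool)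
    (hb : ∏ i, (sgn (b i) : K) = -1) (x y : Fin n → K) :
    f (fun i => mat (b i) (x i) (y i)) 0 0 = 0 ∧ f (fun i => mat (b i) (x i) (y i)) 1 1 = 0 := by
  have h := sign_conj hf b x y
  rw [hb] at h
  generalize f (fun i => mat (b i) (x i) (y i)) = M at h
  have h00 := congrFun (congrFun h 0) 0
  have h11 := congrFun (congrFun h 1) 1
  simp only [Matrix.mul_apply, Fin.sum_univ_two] at h00 h11
  simp at h00 h11
  exact ⟨self_eq_neg.mp h00.symm, self_eq_neg.mp h11.symm⟩

lemma even_diag [CharZero K] {f : MultilinearMap K (fun _ : Fin n => Matrix (Fin 2) (Fin 2) K)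
      (Matrix (Fin 2) (Fin 2) K)} (hf : Equivar f) (b : Fin n → Bool)
    (hb : ∏ i, (sgn (b i) : K) = 1) (x y : Fin n → K) :
    f (fun i => mat (b i) (x i) (y i)) 0 1 = 0 := by
  have h := sign_conj hf b x y
  rw [hb] at h
  generalize f (fun i => mat (b i) (x i) (y i)) = M at h
  have h01 := congrFun (congrFun h 0) 1
  simp only [Matrix.mul_apply, Fin.sum_univ_two] at h01
  simp at h01
  exact self_eq_neg.mp h01

/-- The discriminant vanishes on scaled matrix units of odd pattern. -/
lemma disc_units [CharZero K] {f : MultilinearMap K (fun _ : Fin n => Matrix (Fin 2) (Fin 2) K)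
      (Matrix (Fin 2) (Fin 2) K)} (hf : Equivar f) (b : Fin n → Bool)
    (hb : ∏ i, (sgn (b i) : K) = -1) (x y : Fin n → K) (hxy : ∀ i, x i = 0 ∨ y i = 0) :
    disc (f (fun i => mat (b i) (x i) (y i))) = 0 := by
  have hl : ∀ i, ∃ l : K, !![2, 0; 0, 1] * mat (b i) (x i) (y i) * !![1 / 2, 0; 0, 1]
      = l • mat (b i) (x i) (y i) := by
    intro i
    cases b i
    · refine ⟨1, ?_⟩
      ext k j; fin_cases k <;> fin_cases j <;> simp [mat]
      field_simp
    · rcases hxy i with h | h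
      · refine ⟨1 / 2, ?_⟩
        ext k j; fin_cases k <;> fin_cases j <;> simp [mat, h]
        ring
      · refine ⟨2, ?_⟩
        ext k j; fin_cases k <;> fin_cases j <;> simp [mat, h]
  choose l hl using hl
  have h := hf.smul (by ext i j; fin_cases i <;> fin_cases j <;> simp) hl
  obtain ⟨h0, h1⟩ := odd_anti hf b hb x y
  generalize f (fun i => mat (b i) (x i) (y i)) = M at h h0 h1
  generalize (∏ i, l i) = L at h
  have h01 := congrFun (congrFun h 0) 1
  have h10 := congrFun (congrFun h 1) 0
  simp only [Matrix.mul_apply, Fin.sum_univ_two] at h01 h10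
  simp at h01 h10
  have : M 0 1 * M 1 0 = 0 := by
    by_contra hc
    obtain ⟨c1, c2⟩ := mul_ne_zero_iff.mp hc
    have e1 : L = 2 := h01.resolve_right c1
    have e2 : L = 2⁻¹ := mul_right_cancel₀ c2 (by rw [h10]; ring)
    rw [e1] at e2
    field_simp at e2
    norm_num at e2
  simp [disc, h0, h1, this]

/-- Slotwise induction principle. -/
lemma slot_induction {K : Type*} (Q : (Fin n → K) → (Fin n → K) → Prop) (R : K → K → Prop)
    (hbase : ∀ x y, (∀ i, R (x i) (y i)) → Q x y)
    (hstep : ∀ x y a, ∃ x₁ y₁ x₂ y₂, R x₁ y₁ ∧ R x₂ y₂ ∧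
      (Q (update x a x₁) (update y a y₁) → Q (update x a x₂) (update y a y₂) → Q x y)) :
    ∀ x y, Q x y := by
  classical
  have main : ∀ (S : Finset (Fin n)) x y, (∀ i, i ∉ S → R (x i) (y i)) → Q x y := by
    intro S
    induction S using Finset.induction_on with
    | empty =>
      intro x y h
      exact hbase x y fun i => h i (by simp)
    | insert a S ha ih =>
      intro x y h
      obtain ⟨x₁, y₁, x₂, y₂, h1, h2, h3⟩ := hstep x y a
      refine h3 (ih _ _ ?_) (ih _ _ ?_)
      · intro i hi
        by_cases hia : i = a
        · subst hia; simpa using h1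
        · simpa [hia] using h i (by simp [hia, hi])
      · intro i hi
        by_cases hia : i = a
        · subst hia; simpa using h2
        · simpa [hia] using h i (by simp [hia, hi])
  intro x y
  exact main Finset.univ x y (by simp)

lemma mat_update (b : Fin n → Bool) (x y : Fin n → K) (a : Fin n) (u v : K) :
    (fun i => mat (b i) (update x a u i) (update y a v i))
      = update (fun i => mat (b i) (x i) (y i)) a (mat (b a) u v) := by
  ext1 i
  by_cases hi : i = a
  · subst hi; simp
  · simp [hi]

lemma f_split (f : MultilinearMap K (fun _ : Fin n => Matrix (Fin 2) (Fin 2) K)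
      (Matrix (Fin 2) (Fin 2) K)) (b : Fin n → Bool) (x y : Fin n → K) (a : Fin n)
    {u v u' v' : K} (hu : u + u' = x a) (hv : v + v' = y a) :
    f (fun i => mat (b i) (x i) (y i)) =
      f (update (fun i => mat (b i) (x i) (y i)) a (mat (b a) u v)) +
      f (update (fun i => mat (b i) (x i) (y i)) a (mat (b a) u' v')) := by
  rw [← MultilinearMap.map_update_add, ← mat_add, hu, hv]
  congr 1
  exact (update_eq_self a (fun i => mat (b i) (x i) (y i))).symm

lemma disc_odd [IsAlgClosed K] [CharZero K]
    {f : MultilinearMap K (fun _ : Fin n => Matrix (Fin 2) (Fin 2) K)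
      (Matrix (Fin 2) (Fin 2) K)} (hf : Equivar f)
    (hr : ∀ A a X Y, bil (f (update A a X)) (f (update A a Y)) ^ 2
      = disc (f (update A a X)) * disc (f (update A a Y)))
    (b : Fin n → Bool) (hb : ∏ i, (sgn (b i) : K) = -1) :
    ∀ x y : Fin n → K, disc (f (fun i => mat (b i) (x i) (y i))) = 0 := by
  apply slot_induction (fun x y => disc (f (fun i => mat (b i) (x i) (y i))) = 0) (fun u v => u = 0 ∨ v = 0)
  · exact fun x y h => disc_units hf b hb x y h
  · intro x y a
    refine ⟨x a, 0, 0, y a, Or.inr rfl, Or.inl rfl, ?_⟩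
    rw [mat_update, mat_update]
    intro h1 h2
    have h := hr (fun i => mat (b i) (x i) (y i)) a (mat (b a) (x a) 0) (mat (b a) 0 (y a))
    rw [h1, zero_mul] at h
    rw [f_split f b x y a (add_zero (x a)) (zero_add (y a)), disc_add, h1, h2, pow_eq_zero_iff two_ne_zero |>.mp h]
    ring

lemma zero_odd [IsAlgClosed K] [CharZero K]
    {f : MultilinearMap K (fun _ : Fin n => Matrix (Fin 2) (Fin 2) K)
      (Matrix (Fin 2) (Fin 2) K)} (hf : Equivar f)
    (hr : ∀ A a X Y, bil (f (update A a X)) (f (update A a Y)) ^ 2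
      = disc (f (update A a X)) * disc (f (update A a Y)))
    (b : Fin n → Bool) (hb : ∏ i, (sgn (b i) : K) = -1) :
    ∀ x y : Fin n → K, f (fun i => mat (b i) (x i) (y i)) = 0 := by
  apply slot_induction (fun x y => f (fun i => mat (b i) (x i) (y i)) = 0) (fun u v => v = u ∨ v = -u)
  · intro x y hxy
    have hl : ∀ i, ∃ l : K, l ^ 2 = 1 ∧ !![0, 1; 1, 0] * mat (b i) (x i) (y i) * !![0, 1; 1, 0]
        = l • mat (b i) (x i) (y i) := by
      intro i
      rcases hxy i with h | h
      · refine ⟨1, by norm_num, ?_⟩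
        cases b i <;> ext k j <;> fin_cases k <;> fin_cases j <;> simp [mat, h]
      · refine ⟨-1, by norm_num, ?_⟩
        cases b i <;> ext k j <;> fin_cases k <;> fin_cases j <;> simp [mat, h]
    choose l hl1 hl using hl
    have h := hf.smul (by ext i j; fin_cases i <;> fin_cases j <;> simp) hl
    obtain ⟨h0, h1⟩ := odd_anti hf b hb x y
    have hd := disc_odd hf hr b hb x y
    have hL : (∏ i, l i) ^ 2 = 1 := by
      rw [← Finset.prod_pow]
      exact Finset.prod_eq_one fun i _ => hl1 i
    generalize f (fun i => mat (b i) (x i) (y i)) = M at h h0 h1 hd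
    generalize (∏ i, l i) = L at h hL
    have h01 := congrFun (congrFun h 0) 1
    have h10 := congrFun (congrFun h 1) 0
    simp only [Matrix.mul_apply, Fin.sum_univ_two] at h01 h10
    simp at h01 h10
    simp [disc, h0, h1] at hd
    have : M 0 1 = 0 ∧ M 1 0 = 0 := by
      rcases hd with hd | hd
      · exact ⟨hd, by rw [← h01, hd, mul_zero]⟩
      · exact ⟨by rw [← h10, hd, mul_zero], hd⟩
    ext k j; fin_cases k <;> fin_cases j <;> simp [h0, h1, this]
  · intro x y a
    refine ⟨(x a + y a) / 2, (x a + y a) / 2, (x a - y a) / 2, -((x a - y a) / 2),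
      Or.inl rfl, Or.inr rfl, ?_⟩
    rw [mat_update, mat_update]
    intro h1 h2
    rw [f_split f b x y a (u := (x a + y a) / 2) (v := (x a + y a) / 2) (u' := (x a - y a) / 2)
      (v' := -((x a - y a) / 2)) (by ring) (by ring), h1, h2, add_zero]

lemma all_scalar [IsAlgClosed K] [CharZero K]
    {f : MultilinearMap K (fun _ : Fin n => Matrix (Fin 2) (Fin 2) K)
      (Matrix (Fin 2) (Fin 2) K)} (hf : Equivar f)
    (hr : ∀ A a X Y, bil (f (update A a X)) (f (update A a Y)) ^ 2
      = disc (f (update A a X)) * disc (f (update A a Y)))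
    (A : Fin n → Matrix (Fin 2) (Fin 2) K) : IsSc (f A) := by
  classical
  have h01 : ∀ A : Fin n → Matrix (Fin 2) (Fin 2) K, f A 0 1 = 0 := by
    intro A
    have hA : A = (fun i => mat true (A i 0 1) (A i 1 0)) + fun i => mat false (A i 0 0) (A i 1 1) := by
      ext i k j; fin_cases k <;> fin_cases j <;> simp [mat]
    rw [hA, MultilinearMap.map_add_univ, Matrix.sum_apply]
    refine Finset.sum_eq_zero fun s _ => ?_
    have hs : s.piecewise (fun i => mat true (A i 0 1) (A i 1 0))
        (fun i => mat false (A i 0 0) (A i 1 1)) =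
        fun i => mat (decide (i ∈ s)) (if i ∈ s then A i 0 1 else A i 0 0)
          (if i ∈ s then A i 1 0 else A i 1 1) := by
      ext1 i
      by_cases hi : i ∈ s <;> simp [hi]
    rw [hs]
    have hsq : (∏ i, (sgn (decide (i ∈ s)) : K)) ^ 2 = 1 := by
      rw [← Finset.prod_pow]
      refine Finset.prod_eq_one fun i _ => ?_
      by_cases hi : i ∈ s <;> simp [sgn, hi]
    rcases (sq_eq_sq_iff_eq_or_eq_neg.mp (hsq.trans (one_pow 2).symm)) with h | h
    · exact even_diag hf _ h _ _
    · rw [zero_odd hf hr _ h]; rfl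
  have h10 : f A 1 0 = 0 := by
    have h := hf !![0, 1; 1, 0] !![0, 1; 1, 0]
      (by ext i j; fin_cases i <;> fin_cases j <;> simp) A
    have h' := congrFun (congrFun h 0) 1
    rw [h01] at h'
    simp only [Matrix.mul_apply, Fin.sum_univ_two] at h'
    simpa using h'.symm
  refine ⟨h01 A, h10, ?_⟩
  have h := hf !![1, 1; 0, 1] !![1, -1; 0, 1]
    (by ext i j; fin_cases i <;> fin_cases j <;> simp) A
  have h' := congrFun (congrFun h 0) 1
  rw [h01] at h'
  simp only [Matrix.mul_apply, Fin.sum_univ_two] at h'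
  simp [h10, h01 A] at h'
  linear_combination h'

/-- The polynomial as a multilinear map. -/
noncomputable def toMul (c : Equiv.Perm (Fin n) → K) :
    MultilinearMap K (fun _ : Fin n => Matrix (Fin 2) (Fin 2) K) (Matrix (Fin 2) (Fin 2) K) :=
  ∑ σ : Equiv.Perm (Fin n),
    c σ • (MultilinearMap.mkPiAlgebraFin K n (Matrix (Fin 2) (Fin 2) K)).domDomCongr σ

lemma toMul_apply (c : Equiv.Perm (Fin n) → K) (A : Fin n → Matrix (Fin 2) (Fin 2) K) :
    toMul c A = multilinearEval c A := by
  simp [toMul, multilinearEval, List.ofFn_eq_map]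

lemma conj_prod {g g' : Matrix (Fin 2) (Fin 2) K} (h : g * g' = 1)
    {ι : Type*} (A : ι → Matrix (Fin 2) (Fin 2) K) (L : List ι) :
    (L.map fun i => g * A i * g').prod = g * (L.map A).prod * g' := by
  have h' : g' * g = 1 := mul_eq_one_comm.mp h
  induction L with
  | nil => simp [h]
  | cons a L ih =>
    rw [List.map_cons, List.prod_cons, ih, List.map_cons, List.prod_cons]
    calc g * A a * g' * (g * (L.map A).prod * g')
        = g * A a * (g' * g) * (L.map A).prod * g' := by simp only [mul_assoc]
      _ = _ := by rw [h']; simp only [mul_assoc, one_mul]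

lemma toMul_equivar (c : Equiv.Perm (Fin n) → K) : Equivar (toMul c) := by
  intro g g' h A
  rw [toMul_apply, toMul_apply, multilinearEval, multilinearEval, Finset.mul_sum, Finset.sum_mul]
  refine Finset.sum_congr rfl fun σ _ => ?_
  rw [conj_prod h (fun i => A (σ i))]
  simp

lemma isSc_smul {M : Matrix (Fin 2) (Fin 2) K} (h : IsSc M) : M = M 0 0 • 1 := by
  obtain ⟨h1, h2, h3⟩ := h
  ext k j; fin_cases k <;> fin_cases j <;> simp [h1, h2, h3]

end multi

end UniVal

/-- over an algebraically closed field `K` of characteristic zero, a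
multilinear polynomial on `2×2` matrices having some noncentral value of nonzero trace
has a unipotent value (different from the identity). -/
theorem multilinear_polynomial_has_unipotent_value
    {K : Type*} [Field K] [IsAlgClosed K] [CharZero K] {n : ℕ}
    (c : Equiv.Perm (Fin n) → K)
    (h : ∃ A : Fin n → Matrix (Fin 2) (Fin 2) K,
      (∀ lam : K, multilinearEval c A ≠ lam • (1 : Matrix (Fin 2) (Fin 2) K)) ∧
      (multilinearEval c A).trace ≠ 0) :
    ∃ B : Fin n → Matrix (Fin 2) (Fin 2) K,
      (multilinearEval c B - 1) ^ 2 = 0 ∧ multilinearEval c B ≠ 1 := by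
  classical
  obtain ⟨C, hC1, hC2⟩ := h
  by_contra hno
  have hsc : ¬ UniVal.IsSc (UniVal.toMul c C) := by
    intro hs
    rw [UniVal.toMul_apply] at hs
    exact hC1 _ (UniVal.isSc_smul hs)
  have hn : 0 < n := by
    rcases Nat.eq_zero_or_pos n with h0 | h0
    · subst h0
      exfalso
      apply hC1 (∑ σ, c σ)
      simp [multilinearEval]
    · exact h0
  have hN : ∀ A, UniVal.disc (UniVal.toMul c A) = 0 →
      UniVal.IsSc (UniVal.toMul c A) ∨ (UniVal.toMul c A).trace = 0 := by
    intro A hA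
    by_contra hcon
    push Not at hcon
    obtain ⟨h1, h2⟩ := hcon
    apply hno
    refine ⟨Function.update A ⟨0, hn⟩ ((2 / (UniVal.toMul c A).trace) • A ⟨0, hn⟩), ?_⟩
    rw [← UniVal.toMul_apply, MultilinearMap.map_update_smul, Function.update_eq_self]
    generalize UniVal.toMul c A = M at hA h1 h2
    rw [Matrix.trace_fin_two] at *
    simp only [UniVal.disc] at hA
    constructor
    · rw [pow_two]
      ext k j
      fin_cases k <;> fin_cases j <;> simp [Matrix.mul_apply, Fin.sum_univ_two] <;> field_simp
      · linear_combination hA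
      · ring
      · ring
      · linear_combination hA
    · intro he
      apply h1
      have ht : (2 / (M 0 0 + M 1 1)) ≠ 0 := div_ne_zero two_ne_zero h2
      have e01 := congrFun (congrFun he 0) 1
      have e10 := congrFun (congrFun he 1) 0
      have e00 := congrFun (congrFun he 0) 0
      have e11 := congrFun (congrFun he 1) 1
      simp only [Matrix.smul_apply, smul_eq_mul, Matrix.one_apply_eq] at e00 e11
      simp only [Matrix.smul_apply, smul_eq_mul, Matrix.one_apply, zero_ne_one, one_ne_zero,
        if_false] at e01 e10
      exact ⟨(mul_eq_zero.mp e01).resolve_left ht, (mul_eq_zero.mp e10).resolve_left ht,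
        mul_left_cancel₀ ht (e00.trans e11.symm)⟩
  refine hsc (UniVal.all_scalar (UniVal.toMul_equivar c) ?_ C)
  intro A a X Y
  exact UniVal.rank_one (UniVal.toMul c) hN C (by rw [UniVal.toMul_apply]; exact hC2) A a X Y
end
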